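/- Let 1<p<∞ with conjugate exponent q (1/p+1/q=1),5 and let w be a non-increasing positive function on I=(0,a), 0<a≤∞, with W(t)=∫₀ᵗ w dm finite on I. For a measurable function f on I, suppose N(f) := sup{ ∫_I |f·g| dm : g measurable on I, ∫_I (g*)^p w dm ≤ 1 } is finite. Then N(f) = inf{ (∫_I (f*)^q v^{1−q} dm)^{1/q} : v non-increasing, positive on I, with ∫₀ˣ v dm ≤ ∫₀ˣ w dm for all x∈I }; that is, the Köthe dual norm of the classical Lorentz space Λ_{p,w} is given by this infimum over weights v submajorized by w. -/

import Mathlib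

open MeasureTheory Set Filter
open scoped ENNReal

/-- The interval `(0, a)` for `a : ℝ≥0∞` (equals `(0,∞)` when `a = ∞`). -/
def Iset (a : ℝ≥0∞) : Set ℝ := {x : ℝ | 0 < x ∧ ENNReal.ofReal x < a}

/-- Lebesgue measure restricted to the interval `(0,a)`. -/
noncomputable def volI (a : ℝ≥0∞) : Measure ℝ := volume.restrict (Iset a)

/-- Decreasing rearrangement of an `ℝ≥0∞`-valued function with respect to a measure `μ`:
`f^{*,μ}(t) = inf {s > 0 : μ({f > s}) ≤ t}`. -/
noncomputable def rearrE (μ : Measure ℝ) (f : ℝ → ℝ≥0∞) (t : ℝ) : ℝ≥0∞ :=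
  sInf {s : ℝ≥0∞ | 0 < s ∧ μ {x | s < f x} ≤ ENNReal.ofReal t}

/-- Decreasing rearrangement of a real function with respect to a measure `μ` on `ℝ`:
`f^{*,μ}(t) = inf {s > 0 : μ({|f| > s}) ≤ t}`. -/
noncomputable def rearr (μ : Measure ℝ) (f : ℝ → ℝ) (t : ℝ) : ℝ≥0∞ :=
  rearrE μ (fun x => ENNReal.ofReal |f x|) t

/-- The measure `w·dm` on the set `I`. -/
noncomputable def wMeas (I : Set ℝ) (w : ℝ → ℝ) : Measure ℝ :=
  (volume.restrict I).withDensity (fun t => ENNReal.ofReal (w t))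

/-- `W(t) = ∫₀ᵗ w dm`. -/
noncomputable def Wfun (w : ℝ → ℝ) (t : ℝ) : ℝ := ∫ s in Set.Ioo (0:ℝ) t, w s

/-- `b = ∫_I w dm` as an extended real number. -/
noncomputable def bval (a : ℝ≥0∞) (w : ℝ → ℝ) : ℝ≥0∞ := ∫⁻ x in Iset a, ENNReal.ofReal (w x)

/-- The Köthe dual norm of the Lorentz space `Λ_{p,w}`:
`N(f) = sup { ∫_I |f·g| dm : ∫_I (g*)^p w dm ≤ 1 }`. -/
noncomputable def lorentzDualNorm (a : ℝ≥0∞) (w : ℝ → ℝ) (p : ℝ) (f : ℝ → ℝ) : ℝ≥0∞ :=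
  sSup {c : ℝ≥0∞ | ∃ g : ℝ → ℝ, Measurable g ∧
    (∫⁻ t in Iset a, rearr (volI a) g t ^ p * ENNReal.ofReal (w t)) ≤ 1 ∧
    c = ∫⁻ x in Iset a, ENNReal.ofReal |f x * g x|}

/-!
Since `∫ |f g| ≤ ∫ f* g*`, Hölder's inequality with weight `v` bounds the dual norm by
`(∫ (f*)^q v^(1-q))^(1/q) * (∫ (g*)^p v)^(1/p)`, and by Hardy's lemma submajorization lets the
decreasing function `(g*)^p` pass from `v` to `w`.

Conversely, let `λ` be Halperin's level function of `f*`: the slope of the least concave majorant of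
`∫₀ˣ f*` as a function of `∫₀ˣ w`. On the intervals where `λ` is constant the two measures `f* dm`
and `λ w dm` have the same mass, and elsewhere `λ` is `f* / w`. Hence `v = f* / λ` is decreasing
and submajorized by `w`, and `(f*)^q v^(1-q) = λ^(q-1) f*`. As `λ^(q-1)` is decreasing, pairing it
with `f*` is controlled by the dual norm, because every decreasing function on `(0, a)` is
rearranged by a measure-preserving map into a function aligned with `f`. Together with
`∫ λ^(q-1) f* = ∫ λ^q w` this bounds `∫ (f*)^q v^(1-q)` by the `q`-th power of the dual norm.
-/

section LowerSets

variable {α β : Measure ℝ}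

theorem measure_le_of_isLowerSet {S : Set ℝ} (hS : IsLowerSet S) {c : ℝ≥0∞}
    (h : ∀ x ∈ S, α (Iic x) ≤ c) : α S ≤ c := by
  by_cases hmax : ∃ x ∈ S, S ⊆ Iic x
  · obtain ⟨x, hx, hSx⟩ := hmax
    exact (measure_mono hSx).trans (h x hx)
  · push Not at hmax
    have hcover : S ⊆ ⋃ q : {q : ℚ // (q : ℝ) ∈ S}, Iic (q : ℝ) := fun x hx => by
      obtain ⟨y, hy, hxy⟩ := not_subset.1 (hmax x hx)
      obtain ⟨q, hxq, hqy⟩ := exists_rat_btwn (not_le.1 (mt mem_Iic.2 hxy))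
      exact mem_iUnion.2 ⟨⟨q, hS hqy.le hy⟩, hxq.le⟩
    refine (measure_mono hcover).trans ?_
    have hmono : Monotone fun q : {q : ℚ // (q : ℝ) ∈ S} => Iic (q : ℝ) :=
      fun _ _ hqr => Iic_subset_Iic.2 (Rat.cast_le.2 hqr)
    rw [hmono.directed_le.measure_iUnion]
    exact iSup_le fun q => h q q.2

theorem measure_Iic_le_of_forall_mem {S : Set ℝ} (hS : α Sᶜ = 0)
    (h : ∀ x ∈ S, α (Iic x) ≤ β (Iic x)) (x : ℝ) : α (Iic x) ≤ β (Iic x) :=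
  calc α (Iic x)
      ≤ α (lowerClosure (Iic x ∩ S) ∪ Sᶜ : Set ℝ) := measure_mono fun t ht =>
        (em (t ∈ S)).imp (fun htS => subset_lowerClosure ⟨ht, htS⟩) id
    _ ≤ α (lowerClosure (Iic x ∩ S)) := by
        simpa only [hS, add_zero] using measure_union_le (μ := α) (lowerClosure (Iic x ∩ S)) Sᶜ
    _ ≤ β (Iic x) := by
        refine measure_le_of_isLowerSet (lowerClosure (Iic x ∩ S)).lower fun t ht => ?_
        obtain ⟨y, ⟨hyx, hyS⟩, hty⟩ := mem_lowerClosure.1 ht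
        exact (measure_mono (Iic_subset_Iic.2 hty)).trans
          ((h y hyS).trans (measure_mono (Iic_subset_Iic.2 hyx)))

end LowerSets

theorem measurableSet_Iset (c : ℝ≥0∞) : MeasurableSet (Iset c) :=
  (measurableSet_lt measurable_const measurable_id).inter
    (measurableSet_lt ENNReal.measurable_ofReal measurable_const)

theorem Iset_subset_Iset {b c : ℝ≥0∞} (h : b ≤ c) : Iset b ⊆ Iset c :=
  fun _ hx => ⟨hx.1, hx.2.trans_le h⟩

theorem mem_Iset_of_le {a : ℝ≥0∞} {x y : ℝ} (hx : 0 < x) (hxy : x ≤ y) (hy : y ∈ Iset a) :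
    x ∈ Iset a :=
  ⟨hx, (ENNReal.ofReal_le_ofReal hxy).trans_lt hy.2⟩

theorem exists_gt_mem_Iset {a : ℝ≥0∞} {x : ℝ} (hx : x ∈ Iset a) : ∃ y > x, y ∈ Iset a := by
  obtain ⟨c, hxc, hca⟩ := ENNReal.lt_iff_exists_nnreal_btwn.1 hx.2
  have hlt : x < c := (ENNReal.ofReal_lt_coe_iff hx.1.le).1 hxc
  exact ⟨c, hlt, hx.1.trans hlt, by simpa using hca⟩

instance (a : ℝ≥0∞) : NullSingletonClass (volI a) := by
  unfold volI; infer_instance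

theorem volume_Iset (c : ℝ≥0∞) : volume (Iset c) = c := by
  rcases eq_or_ne c ∞ with rfl | hc
  · have : Iset ∞ = Ioi (0 : ℝ) := by ext x; simp [Iset]
    rw [this, Real.volume_Ioi]
  · have : Iset c = Ioo 0 c.toReal := by
      ext x
      exact and_congr_right fun hx => ENNReal.ofReal_lt_iff_lt_toReal hx.le hc
    rw [this, Real.volume_Ioo, sub_zero, ENNReal.ofReal_toReal hc]

theorem volI_univ (c : ℝ≥0∞) : volI c univ = c := by
  rw [volI, Measure.restrict_apply_univ, volume_Iset]

theorem Iic_inter_Iset {a : ℝ≥0∞} {x : ℝ} (hx : x ∈ Iset a) : Iic x ∩ Iset a = Ioc 0 x := by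
  ext t
  exact ⟨fun ht => ⟨ht.2.1, ht.1⟩, fun ht => ⟨ht.2, mem_Iset_of_le ht.1 ht.2 hx⟩⟩

theorem lintegral_eq_lintegral_measure_ofReal_lt {X : Type*} [MeasurableSpace X] (μ : Measure X)
    [SFinite μ] {k : X → ℝ≥0∞} (hk : Measurable k) :
    ∫⁻ x, k x ∂μ = ∫⁻ s in Ioi (0 : ℝ), μ {x | ENNReal.ofReal s < k x} := by
  have hS : MeasurableSet {z : X × ℝ | ENNReal.ofReal z.2 < k z.1} :=
    measurableSet_lt (ENNReal.measurable_ofReal.comp measurable_snd) (hk.comp measurable_fst)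
  calc ∫⁻ x, k x ∂μ
      = ∫⁻ x, volume.restrict (Ioi 0) {s | ENNReal.ofReal s < k x} ∂μ := by
        refine lintegral_congr fun x => ?_
        rw [Measure.restrict_apply (measurableSet_lt ENNReal.measurable_ofReal measurable_const),
          inter_comm]
        exact (volume_Iset (k x)).symm
    _ = μ.prod (volume.restrict (Ioi 0)) {z | ENNReal.ofReal z.2 < k z.1} :=
        (Measure.prod_apply hS).symm
    _ = ∫⁻ s in Ioi (0 : ℝ), μ {x | ENNReal.ofReal s < k x} := Measure.prod_apply_symm hS

theorem lintegral_mul_eq_lintegral_measure_ofReal_lt {X : Type*} [MeasurableSpace X]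
    (μ : Measure X) [SFinite μ] {F G : X → ℝ≥0∞} (hF : Measurable F) (hG : Measurable G) :
    ∫⁻ x, F x * G x ∂μ = ∫⁻ s in Ioi (0 : ℝ), ∫⁻ r in Ioi (0 : ℝ),
      μ ({x | ENNReal.ofReal s < F x} ∩ {x | ENNReal.ofReal r < G x}) := by
  have hdens : ∫⁻ x, F x * G x ∂μ = ∫⁻ x, F x ∂(μ.withDensity G) := by
    rw [lintegral_withDensity_eq_lintegral_mul _ hG hF]
    simp only [Pi.mul_apply, mul_comm]
  rw [hdens, lintegral_eq_lintegral_measure_ofReal_lt _ hF]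
  refine lintegral_congr fun s => ?_
  rw [withDensity_apply _ (measurableSet_lt measurable_const hF),
    lintegral_eq_lintegral_measure_ofReal_lt _ hG]
  refine lintegral_congr fun r => ?_
  rw [Measure.restrict_apply (measurableSet_lt measurable_const hG), inter_comm]

theorem isLowerSet_lt_antitone {k : ℝ → ℝ≥0∞} (hk : Antitone k) (c : ℝ≥0∞) :
    IsLowerSet {t | c < k t} :=
  fun _ _ hts hs => lt_of_lt_of_le hs (hk hts)

theorem lintegral_antitone_le_of_measure_Iic_le {α β : Measure ℝ} [SFinite α] [SFinite β]
    (h : ∀ x, α (Iic x) ≤ β (Iic x)) {k : ℝ → ℝ≥0∞} (hk : Antitone k) :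
    ∫⁻ x, k x ∂α ≤ ∫⁻ x, k x ∂β := by
  rw [lintegral_eq_lintegral_measure_ofReal_lt α hk.measurable,
    lintegral_eq_lintegral_measure_ofReal_lt β hk.measurable]
  refine lintegral_mono fun s => ?_
  have hlow : IsLowerSet {x | ENNReal.ofReal s < k x} := isLowerSet_lt_antitone hk _
  exact measure_le_of_isLowerSet hlow fun x hx =>
    (h x).trans (measure_mono fun t htx => hlow htx hx)

theorem lintegral_mul_le_of_weight {X : Type*} [MeasurableSpace X] {μ : Measure X} {p q : ℝ}
    (hpq : p.HolderConjugate q) {F G v : X → ℝ≥0∞} (hF : AEMeasurable F μ)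
    (hG : AEMeasurable G μ) (hv : AEMeasurable v μ) (hv0 : ∀ᵐ x ∂μ, v x ≠ 0)
    (hvtop : ∀ᵐ x ∂μ, v x ≠ ∞) :
    ∫⁻ x, F x * G x ∂μ ≤
      (∫⁻ x, F x ^ q * v x ^ (1 - q) ∂μ) ^ (1 / q) * (∫⁻ x, G x ^ p * v x ∂μ) ^ (1 / p) := by
  have hexp : -(1 / p) * q = 1 - q := by
    have := hpq.symm.sub_one_mul_conj
    have := hpq.ne_zero
    field_simp
    linarith
  calc ∫⁻ x, F x * G x ∂μ
      = ∫⁻ x, ((fun x => F x * v x ^ (-(1 / p))) * (fun x => G x * v x ^ (1 / p))) x ∂μ := by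
        refine lintegral_congr_ae ?_
        filter_upwards [hv0, hvtop] with x h0 htop
        have hcancel : v x ^ (-(1 / p)) * v x ^ (1 / p) = 1 := by
          rw [← ENNReal.rpow_add _ _ h0 htop, neg_add_cancel, ENNReal.rpow_zero]
        rw [Pi.mul_apply, mul_mul_mul_comm, hcancel, mul_one]
    _ ≤ (∫⁻ x, (F x * v x ^ (-(1 / p))) ^ q ∂μ) ^ (1 / q) *
          (∫⁻ x, (G x * v x ^ (1 / p)) ^ p ∂μ) ^ (1 / p) :=
        ENNReal.lintegral_mul_le_Lp_mul_Lq μ hpq.symm (hF.mul (hv.pow_const _))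
          (hG.mul (hv.pow_const _))
    _ = _ := by
        simp only [ENNReal.mul_rpow_of_nonneg _ _ hpq.nonneg,
          ENNReal.mul_rpow_of_nonneg _ _ hpq.symm.nonneg, ← ENNReal.rpow_mul, hexp,
          one_div_mul_cancel hpq.ne_zero, ENNReal.rpow_one]

section Rearrangement

variable {μ : Measure ℝ} {F : ℝ → ℝ≥0∞} {t : ℝ} {c : ℝ≥0∞}

theorem antitone_rearrE (μ : Measure ℝ) (F : ℝ → ℝ≥0∞) : Antitone (rearrE μ F) :=
  fun _ _ h => sInf_le_sInf fun _ hs => ⟨hs.1, hs.2.trans (ENNReal.ofReal_le_ofReal h)⟩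

theorem measurable_rearrE (μ : Measure ℝ) (F : ℝ → ℝ≥0∞) : Measurable (rearrE μ F) :=
  (antitone_rearrE μ F).measurable

theorem iUnion_lt_eq_of_strictAnti {u : ℕ → ℝ≥0∞} (hu : ∀ n, c < u n)
    (hlim : Tendsto u atTop (nhds c)) : ⋃ n, {x | u n < F x} = {x | c < F x} := by
  ext x
  simp only [mem_iUnion, mem_ofPred_eq]
  exact ⟨fun ⟨n, hn⟩ => (hu n).trans hn, fun hx => (hlim.eventually (gt_mem_nhds hx)).exists⟩

theorem lt_rearrE_iff : c < rearrE μ F t ↔ ENNReal.ofReal t < μ {x | c < F x} := by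
  constructor
  · contrapose!
    intro h
    refine le_of_forall_gt_imp_ge_of_dense fun s hs => ?_
    exact sInf_le ⟨bot_le.trans_lt hs, (measure_mono fun x hx => hs.trans hx).trans h⟩
  · intro h
    have hc : c < ∞ := lt_top_iff_ne_top.2 <| by rintro rfl; simp at h
    obtain ⟨u, hu, hcu, hlim⟩ := exists_seq_strictAnti_tendsto' hc
    have hmono : Monotone fun n => {x | u n < F x} :=
      fun m n hmn x hx => (hu.antitone hmn).trans_lt hx
    rw [← iUnion_lt_eq_of_strictAnti (fun n => (hcu n).1) hlim, hmono.measure_iUnion,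
      lt_iSup_iff] at h
    obtain ⟨n, hn⟩ := h
    refine (hcu n).1.trans_le (le_sInf fun s hs => ?_)
    by_contra! hsn
    exact (hn.trans_le ((measure_mono fun x hx => hsn.trans hx).trans hs.2)).false

theorem rearrE_le_iff : rearrE μ F t ≤ c ↔ μ {x | c < F x} ≤ ENNReal.ofReal t := by
  simpa only [not_lt] using lt_rearrE_iff.not

theorem rearrE_eq_zero_of_measure_univ_le (h : μ univ ≤ ENNReal.ofReal t) : rearrE μ F t = 0 :=
  nonpos_iff_eq_zero.1 (rearrE_le_iff.2 ((measure_mono (subset_univ _)).trans h))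

theorem rearrE_mono_measure {ν : Measure ℝ} (h : μ ≤ ν) : rearrE μ F t ≤ rearrE ν F t :=
  sInf_le_sInf fun _ hs => ⟨hs.1, (h _).trans hs.2⟩

theorem exists_gt_lt_rearrE (ht : 0 ≤ t) (h : c < rearrE μ F t) :
    ∃ t' > t, c < rearrE μ F t' := by
  obtain ⟨m, htm, hm⟩ := exists_between (lt_rearrE_iff.1 h)
  have hmtop : m ≠ ∞ := ne_top_of_lt hm
  exact ⟨m.toReal, (ENNReal.ofReal_lt_iff_lt_toReal ht hmtop).1 htm,
    lt_rearrE_iff.2 (by rwa [ENNReal.ofReal_toReal hmtop])⟩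

end Rearrangement

theorem lintegral_mul_le_lintegral_rearrE_mul_rearrE (a : ℝ≥0∞) {F G : ℝ → ℝ≥0∞}
    (hF : Measurable F) (hG : Measurable G) :
    ∫⁻ x in Iset a, F x * G x ≤
      ∫⁻ t in Iset a, rearrE (volI a) F t * rearrE (volI a) G t := by
  rw [lintegral_mul_eq_lintegral_measure_ofReal_lt _ hF hG,
    lintegral_mul_eq_lintegral_measure_ofReal_lt _ (measurable_rearrE _ F)
      (measurable_rearrE _ G)]
  refine lintegral_mono fun s => lintegral_mono fun r => ?_
  set A := {x | ENNReal.ofReal s < F x}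
  set B := {x | ENNReal.ofReal r < G x}
  calc volI a (A ∩ B)
      ≤ min (volI a A) (volI a B) :=
        le_min (measure_mono inter_subset_left) (measure_mono inter_subset_right)
    _ = volume (Iset (min (volI a A) (volI a B))) := (volume_Iset _).symm
    _ ≤ _ := by
        rw [Measure.restrict_apply' (measurableSet_Iset a)]
        refine measure_mono fun x hx => ?_
        have hxA := hx.2.trans_le (min_le_left _ _)
        have hxB := hx.2.trans_le (min_le_right _ _)
        exact ⟨⟨lt_rearrE_iff.2 hxA, lt_rearrE_iff.2 hxB⟩, hx.1,
          hxA.trans_le ((measure_mono (subset_univ A)).trans_eq (volI_univ a))⟩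

section WeightedMeasure

instance (I : Set ℝ) (w : ℝ → ℝ) : SFinite (wMeas I w) := by
  unfold wMeas; infer_instance

theorem lintegral_wMeas {I : Set ℝ} {w : ℝ → ℝ} (hw : AEMeasurable w (volume.restrict I))
    {k : ℝ → ℝ≥0∞} (hk : Measurable k) :
    ∫⁻ t, k t ∂wMeas I w = ∫⁻ t in I, k t * ENNReal.ofReal (w t) := by
  rw [wMeas, lintegral_withDensity_eq_lintegral_mul₀ hw.ennreal_ofReal hk.aemeasurable]
  simp only [Pi.mul_apply, mul_comm]

theorem withDensity_volI_compl_Iset (a : ℝ≥0∞) (k : ℝ → ℝ≥0∞) :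
    (volI a).withDensity k (Iset a)ᶜ = 0 :=
  withDensity_absolutelyContinuous _ _ <| by
    rw [volI, Measure.restrict_apply (measurableSet_Iset a).compl, compl_inter_self,
      measure_empty]

theorem withDensity_volI_Iic {a : ℝ≥0∞} (k : ℝ → ℝ≥0∞) {x : ℝ} (hx : x ∈ Iset a) :
    (volI a).withDensity k (Iic x) = ∫⁻ t in Ioo 0 x, k t := by
  rw [withDensity_apply _ measurableSet_Iic, volI, Measure.restrict_restrict measurableSet_Iic,
    Iic_inter_Iset hx, restrict_Ioo_eq_restrict_Ioc]

end WeightedMeasure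

section UpperBound

variable {a : ℝ≥0∞} {v w : ℝ → ℝ}

theorem wMeas_Iic_le (h : ∀ x ∈ Iset a, ∫⁻ t in Ioo 0 x, ENNReal.ofReal (v t) ≤
      ∫⁻ t in Ioo 0 x, ENNReal.ofReal (w t)) (x : ℝ) :
    wMeas (Iset a) v (Iic x) ≤ wMeas (Iset a) w (Iic x) := by
  refine measure_Iic_le_of_forall_mem (withDensity_volI_compl_Iset a _) (fun y hy => ?_) x
  exact (withDensity_volI_Iic _ hy).trans_le ((h y hy).trans_eq (withDensity_volI_Iic _ hy).symm)

theorem lorentzDualNorm_le_of_submajorized {p q : ℝ} (hpq : p.HolderConjugate q)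
    (hv_pos : ∀ t ∈ Iset a, 0 < v t) (hv : AntitoneOn v (Iset a)) (hw : AntitoneOn w (Iset a))
    (hvw : ∀ x ∈ Iset a, ∫⁻ t in Ioo 0 x, ENNReal.ofReal (v t) ≤
      ∫⁻ t in Ioo 0 x, ENNReal.ofReal (w t))
    {f : ℝ → ℝ} (hf : Measurable f) :
    lorentzDualNorm a w p f ≤
      (∫⁻ t in Iset a, rearr (volI a) f t ^ q * ENNReal.ofReal (v t) ^ (1 - q)) ^ (1 / q) := by
  have hvm := aemeasurable_restrict_of_antitoneOn (μ := volume) (measurableSet_Iset a) hv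
  have hwm := aemeasurable_restrict_of_antitoneOn (μ := volume) (measurableSet_Iset a) hw
  refine sSup_le ?_
  rintro _ ⟨g, hg, hgw, rfl⟩
  have hgp : Antitone fun t => rearr (volI a) g t ^ p :=
    fun s t hst => ENNReal.rpow_le_rpow (antitone_rearrE _ _ hst) hpq.nonneg
  have hgv : ∫⁻ t in Iset a, rearr (volI a) g t ^ p * ENNReal.ofReal (v t) ≤ 1 := by
    rw [← lintegral_wMeas hvm hgp.measurable]
    refine (lintegral_antitone_le_of_measure_Iic_le (wMeas_Iic_le hvw) hgp).trans ?_
    rwa [lintegral_wMeas hwm hgp.measurable]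
  calc ∫⁻ x in Iset a, ENNReal.ofReal |f x * g x|
      = ∫⁻ x in Iset a, ENNReal.ofReal |f x| * ENNReal.ofReal |g x| := by
        simp only [abs_mul, ENNReal.ofReal_mul (abs_nonneg _)]
    _ ≤ ∫⁻ t in Iset a, rearr (volI a) f t * rearr (volI a) g t :=
        lintegral_mul_le_lintegral_rearrE_mul_rearrE a hf.abs.ennreal_ofReal
          hg.abs.ennreal_ofReal
    _ ≤ (∫⁻ t in Iset a, rearr (volI a) f t ^ q * ENNReal.ofReal (v t) ^ (1 - q)) ^ (1 / q) *
          (∫⁻ t in Iset a, rearr (volI a) g t ^ p * ENNReal.ofReal (v t)) ^ (1 / p) :=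
        lintegral_mul_le_of_weight hpq (measurable_rearrE _ _).aemeasurable
          (measurable_rearrE _ _).aemeasurable hvm.ennreal_ofReal
          (ae_restrict_of_forall_mem (measurableSet_Iset a) fun t ht =>
            (ENNReal.ofReal_pos.2 (hv_pos t ht)).ne')
          (Eventually.of_forall fun _ => ENNReal.ofReal_ne_top)
    _ ≤ _ := mul_le_of_le_one_right' (ENNReal.rpow_le_one hgv hpq.one_div_nonneg)

end UpperBound

theorem continuousOn_measureReal_Iic {α : Measure ℝ} [NullSingletonClass α] {y : ℝ}
    (hy : α (Iic y) ≠ ∞) : ContinuousOn (fun x => α.real (Iic x)) (Iic y) := by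
  simpa only [setIntegral_const, smul_eq_mul, mul_one] using
    (integrableOn_const (C := (1 : ℝ)) hy).continuousOn_Iic_primitive_Iic

section Ryff

variable {ν : Measure ℝ} [IsFiniteMeasure ν] [NullSingletonClass ν]

theorem exists_measureReal_Ioi_eq {t : ℝ} (ht : 0 < t) (htν : t < ν.real univ) :
    ∃ c, ν.real (Ioi c) = t := by
  have hcompl : ∀ c, ν.real (Ioi c) = ν.real univ - ν.real (Iic c) := fun c => by
    rw [← compl_Iic, measureReal_compl measurableSet_Iic]
  have hcont : Continuous fun c => ν.real (Ioi c) := by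
    simp_rw [hcompl]
    refine continuous_const.sub (continuous_iff_continuousAt.2 fun c => ?_)
    exact (continuousOn_measureReal_Iic (y := c + 1) (measure_ne_top _ _)).continuousAt
      (Iic_mem_nhds (lt_add_one c))
  have htop : Tendsto (fun c => ν.real (Ioi c)) atTop (nhds 0) := by
    simp_rw [hcompl]
    rw [← sub_self (ν.real univ)]
    exact tendsto_const_nhds.sub
      ((ENNReal.tendsto_toReal (measure_ne_top ν univ)).comp (tendsto_measure_Iic_atTop ν))
  have hbot : Tendsto (fun c => ν.real (Ioi c)) atBot (nhds (ν.real univ)) := by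
    simp_rw [← measureReal_congr (Ioi_ae_eq_Ici (μ := ν)).symm]
    exact (ENNReal.tendsto_toReal (measure_ne_top ν univ)).comp (tendsto_measure_Ici_atBot ν)
  exact mem_range_of_exists_le_of_exists_ge hcont (htop.eventually_le_const ht).exists
    (hbot.eventually_const_le htν).exists

theorem measure_setOf_measureReal_Ioi_lt_le {t : ℝ} (ht : 0 < t) :
    ν {c | ν.real (Ioi c) < t} ≤ ENNReal.ofReal t := by
  rcases lt_or_ge t (ν.real univ) with htν | htν
  · obtain ⟨c, rfl⟩ := exists_measureReal_Ioi_eq ht htν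
    rw [ofReal_measureReal]
    refine measure_mono fun d hd => ?_
    by_contra hdc
    exact (measureReal_mono (Ioi_subset_Ioi (not_lt.1 hdc)) (measure_ne_top _ _)).not_gt hd
  · exact (measure_mono (subset_univ _)).trans
      ((ofReal_measureReal (μ := ν)).symm.trans_le (ENNReal.ofReal_le_ofReal htν))

theorem le_measure_setOf_measureReal_Ioi_le {t : ℝ} (htν : t ≤ ν.real univ) :
    ENNReal.ofReal t ≤ ν {c | ν.real (Ioi c) ≤ t} := by
  rcases le_or_gt t 0 with ht | ht
  · simp only [ENNReal.ofReal_of_nonpos ht, zero_le]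
  rcases htν.eq_or_lt with rfl | htν
  · rw [ofReal_measureReal]
    exact measure_mono fun c _ => measureReal_mono (subset_univ _) (measure_ne_top _ _)
  · obtain ⟨c, rfl⟩ := exists_measureReal_Ioi_eq ht htν
    rw [ofReal_measureReal]
    exact measure_mono fun d hd =>
      measureReal_mono (Ioi_subset_Ioi (mem_Ioi.1 hd).le) (measure_ne_top _ _)

theorem measure_setOf_measureReal_Ioi_le (t : ℝ) :
    ν {c | ν.real (Ioi c) ≤ t} = min (ν univ) (ENNReal.ofReal t) := by
  refine le_antisymm (le_min (measure_mono (subset_univ _)) ?_) ?_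
  · refine ENNReal.le_of_forall_pos_le_add fun ε hε _ => ?_
    calc ν {c | ν.real (Ioi c) ≤ t}
        ≤ ν {c | ν.real (Ioi c) < max t 0 + ε} := measure_mono fun c hc =>
          lt_of_le_of_lt (le_trans hc (le_max_left t 0)) (lt_add_of_pos_right _ hε)
      _ ≤ ENNReal.ofReal (max t 0 + ε) := measure_setOf_measureReal_Ioi_lt_le (by positivity)
      _ = ENNReal.ofReal t + ε := by
        rw [ENNReal.ofReal_add (le_max_right t 0) ε.coe_nonneg, ENNReal.ofReal_coe_nnreal,
          ENNReal.ofReal_mono.map_max, ENNReal.ofReal_zero, max_eq_left (zero_le)]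
  · rw [← ofReal_measureReal (μ := ν) (s := univ), ← ENNReal.ofReal_mono.map_min]
    exact (le_measure_setOf_measureReal_Ioi_le (min_le_left _ _)).trans
      (measure_mono fun c (hc : ν.real (Ioi c) ≤ _) => hc.trans (min_le_right _ _))

theorem volI_Iic (b : ℝ≥0∞) (t : ℝ) : volI b (Iic t) = min b (ENNReal.ofReal t) := by
  rw [volI, measure_congr Iio_ae_eq_Iic.symm, Measure.restrict_apply measurableSet_Iio,
    ← volume_Iset (min b _)]
  congr 1
  ext x
  simp only [Iset, mem_inter_iff, mem_Iio, mem_ofPred_eq, lt_min_iff]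
  constructor
  · rintro ⟨hxt, hx, hxb⟩
    exact ⟨hx, hxb, (ENNReal.ofReal_lt_ofReal_iff_of_nonneg hx.le).2 hxt⟩
  · rintro ⟨hx, hxb, hxt⟩
    exact ⟨(ENNReal.ofReal_lt_ofReal_iff_of_nonneg hx.le).1 hxt, hx, hxb⟩

theorem measurePreserving_measureReal_Ioi :
    MeasurePreserving (fun c => ν.real (Ioi c)) ν (volI (ν univ)) := by
  have hmeas : Measurable fun c => ν.real (Ioi c) :=
    Antitone.measurable fun c d hcd =>
      measureReal_mono (Ioi_subset_Ioi hcd) (measure_ne_top _ _)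
  refine ⟨hmeas, Measure.ext_of_Iic _ _ fun t => ?_⟩
  rw [Measure.map_apply hmeas measurableSet_Iic, volI_Iic]
  exact measure_setOf_measureReal_Ioi_le t

variable {X : Type*} [MeasurableSpace X] [StandardBorelSpace X] {μ : Measure X}
  [IsFiniteMeasure μ] [NullSingletonClass μ]

theorem exists_measurable_injective_mem_Icc (X : Type*) [MeasurableSpace X]
    [StandardBorelSpace X] :
    ∃ θ : X → ℝ, Measurable θ ∧ Function.Injective θ ∧ ∀ x, θ x ∈ Icc (0 : ℝ) 1 :=
  have h := measurableEmbedding_sigmoid_comp_embeddingReal X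
  ⟨fun x => unitInterval.sigmoid (embeddingReal X x), measurable_subtype_coe.comp h.measurable,
    Subtype.val_injective.comp h.injective, fun _ => Subtype.coe_prop _⟩

/-- The values of `G` are spread out over the gaps `[κ (-∞, c), κ (-∞, c]]` of its distribution `κ`,
each atom being resolved by an injection of `X` into `[0, 1]`. -/
theorem exists_strictMono_refinement {G : X → ℝ} (hG : Measurable G) :
    ∃ G' : X → ℝ, Measurable G' ∧ (∀ x y, G x < G y → G' x < G' y) ∧ ∀ c, μ (G' ⁻¹' {c}) = 0 := by
  obtain ⟨θ, hθ, hθ_inj, hθ01⟩ := exists_measurable_injective_mem_Icc X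
  set κ := μ.map G
  set A : ℝ → ℝ := fun c => κ.real (Iio c)
  set B : ℝ → ℝ := fun c => κ.real (Iic c)
  have hA : Monotone A := fun c d h => measureReal_mono (Iio_subset_Iio h) (measure_ne_top _ _)
  have hB : Monotone B := fun c d h => measureReal_mono (Iic_subset_Iic.2 h) (measure_ne_top _ _)
  have hAB : ∀ c, A c ≤ B c := fun c => measureReal_mono Iio_subset_Iic_self (measure_ne_top _ _)
  have hBA : ∀ {c d}, c < d → B c ≤ A d := fun h =>
    measureReal_mono (Iic_subset_Iio.2 h) (measure_ne_top _ _)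
  set G' : X → ℝ := fun x => G x + (A (G x) + θ x * (B (G x) - A (G x)))
  have hmono : ∀ x y, G x < G y → G' x < G' y := fun x y h => by
    have hx : A (G x) + θ x * (B (G x) - A (G x)) ≤ B (G x) := by
      nlinarith [hAB (G x), (hθ01 x).2]
    have hy : A (G y) ≤ A (G y) + θ y * (B (G y) - A (G y)) := by
      nlinarith [hAB (G y), (hθ01 y).1]
    linarith [hBA h]
  refine ⟨G', hG.add ((hA.measurable.comp hG).add
    (hθ.mul ((hB.measurable.comp hG).sub (hA.measurable.comp hG)))), hmono, fun c => ?_⟩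
  rcases (G' ⁻¹' {c}).eq_empty_or_nonempty with h | ⟨x, hx⟩
  · rw [h, measure_empty]
  have hfib : ∀ y ∈ G' ⁻¹' {c}, G y = G x := fun y hy => le_antisymm
    (not_lt.1 fun h => (hmono x y h).ne (hx.trans hy.symm))
    (not_lt.1 fun h => (hmono y x h).ne (hy.trans hx.symm))
  rcases (hAB (G x)).eq_or_lt with hnull | hatom
  · refine measure_mono_null (t := G ⁻¹' {G x}) hfib ?_
    have hκ : κ.real {G x} = 0 := by
      rw [← Iic_sdiff_Iio_same, measureReal_sdiff Iio_subset_Iic_self measurableSet_Iio]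
      exact sub_eq_zero.2 hnull.symm
    rwa [← Measure.map_apply hG (measurableSet_singleton _), ← measureReal_eq_zero_iff]
  · refine Subsingleton.measure_zero (fun y hy z hz => hθ_inj ?_) μ
    have heq : G' y = G' z := hy.trans hz.symm
    simp only [G', hfib y hy, hfib z hz, add_right_inj] at heq
    exact mul_right_cancel₀ (sub_pos.2 hatom).ne' heq

theorem exists_measurePreserving_volI {G : X → ℝ} (hG : Measurable G) :
    ∃ σ : X → ℝ, MeasurePreserving σ μ (volI (μ univ)) ∧
      ∀ x, μ {y | G x < G y} ≤ ENNReal.ofReal (σ x) := by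
  obtain ⟨G', hG', hmono, hfib⟩ := exists_strictMono_refinement (μ := μ) hG
  have : NullSingletonClass (μ.map G') :=
    ⟨fun c => (Measure.map_apply hG' (measurableSet_singleton c)).trans (hfib c)⟩
  have huniv : μ.map G' univ = μ univ := by
    rw [Measure.map_apply hG' MeasurableSet.univ, preimage_univ]
  have hpres := measurePreserving_measureReal_Ioi (ν := μ.map G')
  rw [huniv] at hpres
  refine ⟨_, hpres.comp (hG'.measurePreserving μ), fun x => ?_⟩
  rw [Function.comp_apply, ofReal_measureReal, Measure.map_apply hG' measurableSet_Ioi]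
  exact measure_mono fun y hy => hmono x y hy

end Ryff

section LowerBound

variable {a b : ℝ≥0∞} {k : ℝ → ℝ≥0∞} {σ : ℝ → ℝ} {f : ℝ → ℝ} {w : ℝ → ℝ} {p : ℝ}

theorem rearr_indicator_comp_le (hσ : MeasurePreserving σ (volI b) (volI b)) (hk : Antitone k)
    (hk_top : ∀ t, k t ≠ ∞) (t : ℝ) :
    rearr (volI a) ((Iset b).indicator fun x => (k (σ x)).toReal) t ≤ k t := by
  have hlevel : MeasurableSet {s | k t < k s} := measurableSet_lt measurable_const hk.measurable
  refine rearrE_le_iff.2 ?_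
  calc volI a {x | k t < ENNReal.ofReal |(Iset b).indicator (fun x => (k (σ x)).toReal) x|}
      ≤ volume (σ ⁻¹' {s | k t < k s} ∩ Iset b) := by
        refine (Measure.restrict_apply_le _ _).trans (measure_mono fun x hx => ?_)
        rw [mem_ofPred_eq] at hx
        have hxb : x ∈ Iset b := by
          by_contra hxb
          simp [indicator_of_notMem hxb] at hx
        refine ⟨?_, hxb⟩
        rwa [indicator_of_mem hxb, abs_of_nonneg ENNReal.toReal_nonneg,
          ENNReal.ofReal_toReal (hk_top _)] at hx
    _ = volI b (σ ⁻¹' {s | k t < k s}) := (Measure.restrict_apply' (measurableSet_Iset b)).symm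
    _ = volI b {s | k t < k s} := hσ.measure_preimage hlevel.nullMeasurableSet
    _ ≤ volI b (Iic t) := measure_mono fun s hs => (hk.reflect_lt hs).le
    _ ≤ ENNReal.ofReal t := (volI_Iic b t).trans_le (min_le_right _ _)

theorem setLIntegral_rearr_mul_le_lorentzDualNorm_of_finite (hb : b ≠ ∞) (hba : b ≤ a)
    (hp : 0 ≤ p) (hf : Measurable f) (hk : Antitone k) (hk_top : ∀ t, k t ≠ ∞)
    (hkw : ∫⁻ t in Iset a, k t ^ p * ENNReal.ofReal (w t) ≤ 1) :
    ∫⁻ t in Iset b, rearr (volI b) f t * k t ≤ lorentzDualNorm a w p f := by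
  have : IsFiniteMeasure (volI b) := ⟨(volI_univ b).trans_lt hb.lt_top⟩
  obtain ⟨σ, hσ, hσf⟩ := exists_measurePreserving_volI (μ := volI b) hf.abs
  rw [volI_univ] at hσ
  set g : ℝ → ℝ := (Iset b).indicator fun x => (k (σ x)).toReal with hg
  have hg_meas : Measurable g :=
    (hk.measurable.comp hσ.measurable).ennreal_toReal.indicator (measurableSet_Iset b)
  have hgw : ∫⁻ t in Iset a, rearr (volI a) g t ^ p * ENNReal.ofReal (w t) ≤ 1 :=
    (lintegral_mono fun t => mul_le_mul_left
      (ENNReal.rpow_le_rpow (rearr_indicator_comp_le hσ hk hk_top t) hp) _).trans hkw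
  have hfσ : ∀ x, rearr (volI b) f (σ x) ≤ ENNReal.ofReal |f x| := fun x =>
    rearrE_le_iff.2 <| (measure_mono fun y hy => ENNReal.ofReal_mono.reflect_lt hy).trans (hσf x)
  calc ∫⁻ t in Iset b, rearr (volI b) f t * k t
      = ∫⁻ x in Iset b, rearr (volI b) f (σ x) * k (σ x) :=
        (hσ.lintegral_comp ((measurable_rearrE _ _).mul hk.measurable)).symm
    _ ≤ ∫⁻ x in Iset b, ENNReal.ofReal |f x * g x| := by
        refine setLIntegral_mono' (measurableSet_Iset b) fun x hx => ?_
        rw [abs_mul, ENNReal.ofReal_mul (abs_nonneg _), hg, indicator_of_mem hx,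
          abs_of_nonneg ENNReal.toReal_nonneg, ENNReal.ofReal_toReal (hk_top _)]
        exact mul_le_mul_left (hfσ x) _
    _ ≤ ∫⁻ x in Iset a, ENNReal.ofReal |f x * g x| := lintegral_mono_set (Iset_subset_Iset hba)
    _ ≤ lorentzDualNorm a w p f := le_sSup ⟨g, hg_meas, hgw, rfl⟩

theorem iUnion_Iset_min (a : ℝ≥0∞) : ⋃ n : ℕ, Iset (min a n) = Iset a := by
  refine Subset.antisymm (iUnion_subset fun n => Iset_subset_Iset (min_le_left _ _)) fun x hx => ?_
  obtain ⟨n, hn⟩ := ENNReal.exists_nat_gt (ENNReal.ofReal_ne_top (r := x))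
  exact mem_iUnion.2 ⟨n, hx.1, lt_min hx.2 hn⟩

theorem monotone_Iset_min (a : ℝ≥0∞) : Monotone fun n : ℕ => Iset (min a n) :=
  fun _ _ h => Iset_subset_Iset (min_le_min le_rfl (Nat.cast_le.2 h))

theorem volI_eq_iSup (a : ℝ≥0∞) (S : Set ℝ) : volI a S = ⨆ n : ℕ, volI (min a n) S := by
  simp_rw [volI, Measure.restrict_apply' (measurableSet_Iset _)]
  rw [← iUnion_Iset_min, inter_iUnion, Monotone.measure_iUnion]
  exact fun _ _ h => inter_subset_inter_right _ (monotone_Iset_min a h)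

theorem rearrE_le_iSup_min (a : ℝ≥0∞) (F : ℝ → ℝ≥0∞) (t : ℝ) :
    rearrE (volI a) F t ≤ ⨆ n : ℕ, rearrE (volI (min a n)) F t := by
  refine le_of_forall_lt fun c hc => ?_
  rw [lt_rearrE_iff, volI_eq_iSup, lt_iSup_iff] at hc
  obtain ⟨n, hn⟩ := hc
  exact lt_iSup_iff.2 ⟨n, lt_rearrE_iff.2 hn⟩

theorem setLIntegral_rearr_mul_le_lorentzDualNorm (hp : 0 ≤ p) (hf : Measurable f)
    (hk : Antitone k) (hk_top : ∀ t, k t ≠ ∞)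
    (hkw : ∫⁻ t in Iset a, k t ^ p * ENNReal.ofReal (w t) ≤ 1) :
    ∫⁻ t in Iset a, rearr (volI a) f t * k t ≤ lorentzDualNorm a w p f := by
  set φ : ℕ → ℝ → ℝ≥0∞ := fun n => rearr (volI (min a n)) f
  have hφ : Monotone fun n t => φ n t * k t := fun m n h t => mul_le_mul_left
    (rearrE_mono_measure (Measure.restrict_mono (monotone_Iset_min a h) le_rfl)) _
  calc ∫⁻ t in Iset a, rearr (volI a) f t * k t
      ≤ ∫⁻ t in Iset a, ⨆ n, φ n t * k t := lintegral_mono fun t => by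
        rw [← ENNReal.iSup_mul]
        exact mul_le_mul_left (rearrE_le_iSup_min a _ t) _
    _ = ⨆ n, ∫⁻ t in Iset a, φ n t * k t :=
        lintegral_iSup (fun n => (measurable_rearrE _ _).mul hk.measurable) hφ
    _ ≤ lorentzDualNorm a w p f := iSup_le fun n => ?_
  have hsupp : ∀ t ∈ Iset a, φ n t * k t ≤
      (Iset (min a n)).indicator (fun t => φ n t * k t) t := fun t ht => by
    by_cases htn : t ∈ Iset (min a n)
    · rw [indicator_of_mem htn]
    · have hzero : φ n t = 0 := rearrE_eq_zero_of_measure_univ_le <|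
        (volI_univ _).trans_le (not_lt.1 fun hlt => htn ⟨ht.1, hlt⟩)
      rw [hzero, zero_mul]
      exact zero_le
  calc ∫⁻ t in Iset a, φ n t * k t
      ≤ ∫⁻ t in Iset (min a n), φ n t * k t := by
        refine (setLIntegral_mono' (measurableSet_Iset a) hsupp).trans_eq ?_
        rw [setLIntegral_indicator (measurableSet_Iset _),
          inter_eq_left.2 (Iset_subset_Iset (min_le_left a n))]
    _ ≤ lorentzDualNorm a w p f :=
        setLIntegral_rearr_mul_le_lorentzDualNorm_of_finite
          (ne_top_of_le_ne_top (ENNReal.natCast_ne_top n) (min_le_right _ _)) (min_le_left _ _)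
          hp hf hk hk_top hkw

end LowerBound

theorem le_of_forall_one_lt_le_rpow_mul {x y : ℝ≥0∞} (r : ℝ)
    (h : ∀ c : ℝ≥0∞, 1 < c → c ≠ ∞ → x ≤ c ^ r * y) : x ≤ y := by
  have hlim : Tendsto (fun c : ℝ≥0∞ => c ^ r * y) (nhdsWithin 1 (Ioi 1)) (nhds y) := by
    have hpow := (ENNReal.continuous_rpow_const (y := r)).tendsto 1
    rw [ENNReal.one_rpow] at hpow
    simpa only [one_mul] using
      ENNReal.Tendsto.mul_const (hpow.mono_left nhdsWithin_le_nhds) (Or.inl one_ne_zero)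
  have : (nhdsWithin (1 : ℝ≥0∞) (Ioi 1)).NeBot := nhdsGT_neBot_of_exists_gt ⟨∞, ENNReal.one_lt_top⟩
  refine ge_of_tendsto hlim ?_
  filter_upwards [self_mem_nhdsWithin, nhdsWithin_le_nhds (Iio_mem_nhds ENNReal.one_lt_top)]
    with c hc hc_top using h c hc hc_top.ne

theorem rpow_le_mul_rpow_of_le_mul {x y c : ℝ≥0∞} (hx : x ≠ ∞) (hc : c ≠ 0) (hc_top : c ≠ ∞)
    (hxy : x ≤ c * y) (hyx : y ≤ c * x) (γ : ℝ) : x ^ γ ≤ c ^ |γ| * y ^ γ := by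
  rcases le_total 0 γ with hγ | hγ
  · rw [abs_of_nonneg hγ, ← ENNReal.mul_rpow_of_nonneg _ _ hγ]
    exact ENNReal.rpow_le_rpow hxy hγ
  · have hflip : (c * x) ^ γ ≤ y ^ γ := by
      rw [← neg_neg γ, ENNReal.rpow_neg _ (-γ), ENNReal.rpow_neg _ (-γ)]
      exact ENNReal.inv_le_inv.2 (ENNReal.rpow_le_rpow hyx (neg_nonneg.2 hγ))
    calc x ^ γ = c ^ |γ| * (c * x) ^ γ := by
          rw [ENNReal.mul_rpow_of_ne_top hc_top hx, ← mul_assoc, ← ENNReal.rpow_add _ _ hc hc_top,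
            abs_of_nonpos hγ, neg_add_cancel, ENNReal.rpow_zero, one_mul]
      _ ≤ c ^ |γ| * y ^ γ := mul_le_mul_right hflip _

section Slicing

variable {X : Type*} [MeasurableSpace X] {μ ν : Measure X} {ρ : X → ℝ≥0∞}

theorem setLIntegral_preimage_Ioo_zero_top_eq_tsum (hρ : Measurable ρ) {c : ℝ≥0∞} (hc : 1 < c)
    (hc_top : c ≠ ∞) (F : X → ℝ≥0∞) :
    ∫⁻ x in ρ ⁻¹' Ioo 0 ∞, F x ∂μ = ∑' k : ℤ, ∫⁻ x in ρ ⁻¹' Ioc (c ^ k) (c ^ (k + 1)), F x ∂μ := by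
  have hc0 : c ≠ 0 := (zero_lt_one.trans hc).ne'
  have hcover : Ioo 0 ∞ = ⋃ k : ℤ, Ioc (c ^ k) (c ^ (k + 1)) := by
    ext x
    simp only [mem_iUnion]
    refine ⟨fun hx => ENNReal.exists_mem_Ioc_zpow hx.1.ne' hx.2.ne hc hc_top, ?_⟩
    rintro ⟨k, hk⟩
    exact ⟨bot_le.trans_lt hk.1, hk.2.trans_lt (ENNReal.zpow_lt_top hc0 hc_top _)⟩
  have hdisj : Pairwise (Function.onFun Disjoint fun k : ℤ => Ioc (c ^ k) (c ^ (k + 1))) :=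
    (ENNReal.monotone_zpow hc.le).pairwise_disjoint_on_Ioc_succ
  rw [hcover, preimage_iUnion, lintegral_iUnion (fun k => hρ measurableSet_Ioc)
    fun i j hij => (hdisj hij).preimage ρ]

/-- Compare both integrands with a constant on each slice `{cᵏ < ρ ≤ cᵏ⁺¹}`, then let `c → 1`. -/
theorem setLIntegral_rpow_le_of_measure_preimage_Ioc_le (hρ : Measurable ρ) {δ : ℝ}
    (h : ∀ c s : ℝ≥0∞, 1 < c → c ≠ ∞ → s ≠ 0 → s ≠ ∞ →
      μ (ρ ⁻¹' Ioc s (c * s)) ≤ c * s ^ δ * ν (ρ ⁻¹' Ioc s (c * s))) (γ : ℝ) :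
    ∫⁻ x in ρ ⁻¹' Ioo 0 ∞, ρ x ^ γ ∂μ ≤ ∫⁻ x in ρ ⁻¹' Ioo 0 ∞, ρ x ^ (γ + δ) ∂ν := by
  refine le_of_forall_one_lt_le_rpow_mul (|γ| + 1 + |γ + δ|) fun c hc hc_top => ?_
  have hc0 : c ≠ 0 := (zero_lt_one.trans hc).ne'
  rw [setLIntegral_preimage_Ioo_zero_top_eq_tsum hρ hc hc_top,
    setLIntegral_preimage_Ioo_zero_top_eq_tsum hρ hc hc_top, ← ENNReal.tsum_mul_left]
  refine ENNReal.tsum_le_tsum fun k => ?_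
  set s := c ^ k with hs
  have hs0 : s ≠ 0 := (ENNReal.zpow_pos hc0 hc_top k).ne'
  have hs_top : s ≠ ∞ := (ENNReal.zpow_lt_top hc0 hc_top k).ne
  have hs_succ : c ^ (k + 1) = c * s := by
    rw [hs, ENNReal.zpow_add hc0 hc_top, zpow_one, mul_comm]
  rw [hs_succ]
  set E := ρ ⁻¹' Ioc s (c * s)
  have hE_meas : MeasurableSet E := hρ measurableSet_Ioc
  have hρs : ∀ x ∈ E, s ≤ c * ρ x ∧ ρ x ≠ ∞ := fun x hx =>
    ⟨hx.1.le.trans (le_mul_of_one_le_left' hc.le),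
      ne_top_of_le_ne_top (ENNReal.mul_ne_top hc_top hs_top) hx.2⟩
  calc ∫⁻ x in E, ρ x ^ γ ∂μ
      ≤ ∫⁻ _ in E, c ^ |γ| * s ^ γ ∂μ := setLIntegral_mono' hE_meas fun x hx =>
        rpow_le_mul_rpow_of_le_mul (hρs x hx).2 hc0 hc_top hx.2 (hρs x hx).1 γ
    _ = c ^ |γ| * s ^ γ * μ E := setLIntegral_const _ _
    _ ≤ c ^ |γ| * s ^ γ * (c * s ^ δ * ν E) := mul_le_mul_right (h c s hc hc_top hs0 hs_top) _
    _ = c ^ |γ| * c * (s ^ (γ + δ) * ν E) := by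
        rw [ENNReal.rpow_add _ _ hs0 hs_top]
        ring
    _ = c ^ |γ| * c * ∫⁻ _ in E, s ^ (γ + δ) ∂ν := by rw [setLIntegral_const]
    _ ≤ c ^ |γ| * c * ∫⁻ x in E, c ^ |γ + δ| * ρ x ^ (γ + δ) ∂ν :=
        mul_le_mul_right (setLIntegral_mono' hE_meas fun x hx =>
          rpow_le_mul_rpow_of_le_mul hs_top hc0 hc_top (hρs x hx).1 hx.2 _) _
    _ = c ^ (|γ| + 1 + |γ + δ|) * ∫⁻ x in E, ρ x ^ (γ + δ) ∂ν := by
        rw [lintegral_const_mul _ (hρ.pow_const _), ← mul_assoc, ENNReal.rpow_add _ _ hc0 hc_top,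
          ENNReal.rpow_add _ _ hc0 hc_top, ENNReal.rpow_one]

theorem lintegral_rpow_le_lintegral_rpow_sub_one (hρ : Measurable ρ) (hρ_top : ∀ x, ρ x ≠ ∞)
    {q : ℝ} (hq : 0 < q) (h : ∀ s u, s * μ (ρ ⁻¹' Ioc s u) ≤ ν (ρ ⁻¹' Ioc s u)) :
    ∫⁻ x, ρ x ^ q ∂μ ≤ ∫⁻ x, ρ x ^ (q - 1) ∂ν := by
  have hslice : ∀ c s : ℝ≥0∞, 1 < c → c ≠ ∞ → s ≠ 0 → s ≠ ∞ →
      μ (ρ ⁻¹' Ioc s (c * s)) ≤ c * s ^ (-1 : ℝ) * ν (ρ ⁻¹' Ioc s (c * s)) := by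
    intro c s hc _ hs hs_top
    calc μ (ρ ⁻¹' Ioc s (c * s)) = s ^ (-1 : ℝ) * (s * μ (ρ ⁻¹' Ioc s (c * s))) := by
          rw [ENNReal.rpow_neg_one, ← mul_assoc, ENNReal.inv_mul_cancel hs hs_top, one_mul]
      _ ≤ s ^ (-1 : ℝ) * ν (ρ ⁻¹' Ioc s (c * s)) := mul_le_mul_right (h _ _) _
      _ ≤ c * s ^ (-1 : ℝ) * ν (ρ ⁻¹' Ioc s (c * s)) :=
          mul_le_mul_left (le_mul_of_one_le_left' hc.le) _
  have hsupp : ∀ x, ρ x ^ q ≤ (ρ ⁻¹' Ioo 0 ∞).indicator (fun x => ρ x ^ q) x := fun x => by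
    rcases eq_or_ne (ρ x) 0 with h0 | h0
    · rw [h0, ENNReal.zero_rpow_of_pos hq]
      exact zero_le
    · have hx : x ∈ ρ ⁻¹' Ioo 0 ∞ := ⟨pos_iff_ne_zero.2 h0, (hρ_top x).lt_top⟩
      rw [indicator_of_mem hx]
  calc ∫⁻ x, ρ x ^ q ∂μ ≤ ∫⁻ x in ρ ⁻¹' Ioo 0 ∞, ρ x ^ q ∂μ := by
        rw [← lintegral_indicator (hρ measurableSet_Ioo)]
        exact lintegral_mono hsupp
    _ ≤ ∫⁻ x in ρ ⁻¹' Ioo 0 ∞, ρ x ^ (q + -1) ∂ν :=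
        setLIntegral_rpow_le_of_measure_preimage_Ioc_le hρ hslice q
    _ ≤ ∫⁻ x, ρ x ^ (q - 1) ∂ν := setLIntegral_le_lintegral _ _

end Slicing

section LevelFunction

variable {α β : Measure ℝ} {r s : ℝ≥0∞} {t x y : ℝ}

/-- The point `y` is a record at rate `r` when, measured backwards from `y`, the measure `α` is at
least `r • β`. Lower sets `B` are removed rather than intervals `Iic z`, so that `B = ∅` and the
two kinds of half-lines are covered at once. -/
def IsRecord (α β : Measure ℝ) (r : ℝ≥0∞) (y : ℝ) : Prop :=
  ∀ B : Set ℝ, IsLowerSet B → r * β (Iic y \ B) ≤ α (Iic y \ B)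

/-- The level function of `α` with respect to `β`: the slope at `t`, from the right, of the least
concave majorant of `α` seen as a function of `β`. It is encoded as the supremum of the rates of
the records beyond `t`. -/
noncomputable def levelFun (α β : Measure ℝ) (t : ℝ) : ℝ≥0∞ :=
  sSup {r | ∃ y > t, IsRecord α β r y}

theorem IsRecord.mono (h : IsRecord α β r y) (hsr : s ≤ r) : IsRecord α β s y :=
  fun B hB => (mul_le_mul_left hsr _).trans (h B hB)

theorem lt_levelFun_iff : s < levelFun α β t ↔ ∃ r > s, ∃ y > t, IsRecord α β r y := by
  simp only [levelFun, lt_sSup_iff, mem_ofPred_eq]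
  exact ⟨fun ⟨r, hy, hsr⟩ => ⟨r, hsr, hy⟩, fun ⟨r, hsr, hy⟩ => ⟨r, hy, hsr⟩⟩

theorem antitone_levelFun (α β : Measure ℝ) : Antitone (levelFun α β) :=
  fun _ _ h => sSup_le_sSup fun _ ⟨y, hy, hr⟩ => ⟨y, h.trans_lt hy, hr⟩

theorem isLowerSet_lt_levelFun (s : ℝ≥0∞) : IsLowerSet {t | s < levelFun α β t} :=
  isLowerSet_lt_antitone (antitone_levelFun α β) s

theorem mul_measure_lt_levelFun_sdiff_le [NullSingletonClass α] {B : Set ℝ} (hB : IsLowerSet B)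
    (s : ℝ≥0∞) :
    s * β ({t | s < levelFun α β t} \ B) ≤ α ({t | s < levelFun α β t} \ B) := by
  set S := {t | s < levelFun α β t}
  have hBm : MeasurableSet Bᶜ := hB.ordConnected.measurableSet.compl
  suffices h : ((s • β).restrict Bᶜ) S ≤ α (S \ B) by
    rwa [Measure.restrict_apply' hBm] at h
  refine measure_le_of_isLowerSet (isLowerSet_lt_levelFun s) fun x hx => ?_
  obtain ⟨r, hsr, y, hxy, hy⟩ := lt_levelFun_iff.1 hx
  rw [Measure.restrict_apply' hBm]
  calc s * β (Iic x \ B)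
      ≤ s * β (Iic y \ B) := by gcongr
    _ ≤ α (Iic y \ B) := (hy.mono hsr.le) B hB
    _ = α (Iio y \ B) := measure_congr (Iio_ae_eq_Iic.symm.diff (ae_eq_refl B))
    _ ≤ α (S \ B) := measure_mono <| sdiff_subset_sdiff_left fun u hu =>
        lt_levelFun_iff.2 ⟨r, hsr, y, hu, hy⟩

theorem isRecord_of_forall_Ioc [NullSingletonClass β] (hβ : β (Iic 0) = 0) (hy : 0 ≤ y)
    (h : ∀ z ∈ Icc 0 y, r * β (Ioc z y) ≤ α (Ioc z y)) : IsRecord α β r y := by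
  intro B hB
  by_cases hyB : y ∈ B
  · have hsub : Iic y ⊆ B := fun t ht => hB ht hyB
    rw [sdiff_eq_empty.2 hsub, measure_empty, measure_empty, mul_zero]
  have hBy : ∀ b ∈ insert 0 B, b ≤ y := by
    rintro b (rfl | hb)
    exacts [hy, le_of_not_ge fun hyb => hyB (hB hyb hb)]
  set z := sSup (insert 0 B)
  have hz : ∀ b ∈ insert 0 B, b ≤ z := fun b hb => le_csSup ⟨y, hBy⟩ hb
  have hsub : Iic y \ B ⊆ Iic 0 ∪ {z} ∪ Ioc z y := fun t ht => by
    by_contra! hcon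
    simp only [mem_union, mem_Iic, mem_singleton_iff, mem_Ioc, not_or, not_and, not_le] at hcon
    have htz : t < z := lt_of_le_of_ne (le_of_not_gt fun hzt => (hcon.2 hzt).not_ge ht.1) hcon.1.2
    obtain ⟨b, rfl | hb, htb⟩ := exists_lt_of_lt_csSup (insert_nonempty 0 B) htz
    exacts [htb.not_gt hcon.1.1, ht.2 (hB htb.le hb)]
  calc r * β (Iic y \ B)
      ≤ r * β (Ioc z y) := by
        have hnull : β (Iic 0 ∪ {z}) = 0 := measure_union_null hβ (measure_singleton z)
        refine mul_le_mul_right ((measure_mono hsub).trans ?_) _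
        exact (measure_union_le _ _).trans_eq (by rw [hnull, zero_add])
    _ ≤ α (Ioc z y) := h z ⟨hz 0 (mem_insert 0 B), csSup_le (insert_nonempty 0 B) hBy⟩
    _ ≤ α (Iic y \ B) := measure_mono fun t ht =>
        ⟨ht.2, fun htB => ht.1.not_ge (hz t (mem_insert_of_mem 0 htB))⟩

theorem measureReal_Ioc_eq_sub {μ : Measure ℝ} (hx : μ (Iic x) ≠ ∞) (hyx : y ≤ x) :
    μ.real (Ioc y x) = μ.real (Iic x) - μ.real (Iic y) := by
  rw [← Iic_sdiff_Iic, measureReal_sdiff (Iic_subset_Iic.2 hyx) measurableSet_Iic hx]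

/-- The last record before `x` is found where `α (Iic u) - r * β (Iic u)` is largest on
`[0, x]`. -/
theorem exists_isRecord_measure_Ioc_le [NullSingletonClass α] [NullSingletonClass β]
    (hβ0 : β (Iic 0) = 0) (hα : α (Iic x) ≠ ∞) (hβ : β (Iic x) ≠ ∞) (hx : 0 ≤ x) (hr : r ≠ ∞) :
    ∃ m ≤ x, IsRecord α β r m ∧ α (Ioc m x) ≤ r * β (Ioc m x) := by
  lift r to NNReal using hr
  have hcont : ContinuousOn (fun u => α.real (Iic u) - r * β.real (Iic u)) (Icc 0 x) :=
    ((continuousOn_measureReal_Iic hα).sub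
      (continuousOn_const.mul (continuousOn_measureReal_Iic hβ))).mono Icc_subset_Iic_self
  obtain ⟨m, ⟨hm0, hmx⟩, hmax⟩ := isCompact_Icc.exists_isMaxOn (nonempty_Icc.2 hx) hcont
  have hfin : ∀ {μ : Measure ℝ} {z u}, μ (Iic x) ≠ ∞ → u ≤ x → μ (Ioc z u) ≠ ∞ :=
    fun hμ hu => ne_top_of_le_ne_top hμ (measure_mono fun _ ht => ht.2.trans hu)
  have hmono : ∀ {μ : Measure ℝ}, μ (Iic x) ≠ ∞ → μ (Iic m) ≠ ∞ :=
    fun hμ => ne_top_of_le_ne_top hμ (measure_mono (Iic_subset_Iic.2 hmx))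
  refine ⟨m, hmx, isRecord_of_forall_Ioc hβ0 hm0 fun z hz => ?_, ?_⟩
  · have hle := hmax ⟨hz.1, hz.2.trans hmx⟩
    rw [← ENNReal.toReal_le_toReal (ENNReal.mul_ne_top ENNReal.coe_ne_top (hfin hβ hmx))
      (hfin hα hmx), ENNReal.toReal_mul, ENNReal.coe_toReal]
    change r * β.real (Ioc z m) ≤ α.real (Ioc z m)
    rw [measureReal_Ioc_eq_sub (hmono hα) hz.2, measureReal_Ioc_eq_sub (hmono hβ) hz.2]
    simp only [mem_ofPred_eq] at hle
    linarith
  · have hle := hmax ⟨hx, le_rfl⟩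
    rw [← ENNReal.toReal_le_toReal (hfin hα le_rfl)
      (ENNReal.mul_ne_top ENNReal.coe_ne_top (hfin hβ le_rfl)), ENNReal.toReal_mul,
      ENNReal.coe_toReal]
    change α.real (Ioc m x) ≤ r * β.real (Ioc m x)
    rw [measureReal_Ioc_eq_sub hα hmx, measureReal_Ioc_eq_sub hβ hmx]
    simp only [mem_ofPred_eq] at hle
    linarith

theorem measure_Ioc_sdiff_lt_levelFun_le_add [NullSingletonClass α] {m : ℝ} {ε : ℝ≥0∞}
    (hβ : β (Iic x) ≠ ∞) (hr : r ≠ ∞) (hSx : {t | r < levelFun α β t} ⊆ Iic x)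
    (h : α (Ioc m x) ≤ (r + ε) * β (Ioc m x)) :
    α (Ioc m x \ {t | r < levelFun α β t}) ≤
      r * β (Ioc m x \ {t | r < levelFun α β t}) + ε * β (Ioc m x) := by
  set S := {t | r < levelFun α β t}
  have hSm : MeasurableSet S := (isLowerSet_lt_levelFun r).ordConnected.measurableSet
  have hinter : Ioc m x ∩ S = S \ Iic m := by
    ext t
    exact ⟨fun ht => ⟨ht.2, ht.1.1.not_ge⟩, fun ht => ⟨⟨not_le.1 ht.2, hSx ht.1⟩, ht.1⟩⟩
  have hfin : r * β (Ioc m x ∩ S) ≠ ∞ := ENNReal.mul_ne_top hr <|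
    ne_top_of_le_ne_top hβ (measure_mono fun t ht => ht.1.2)
  rw [← ENNReal.add_le_add_iff_left hfin]
  calc r * β (Ioc m x ∩ S) + α (Ioc m x \ S)
      ≤ α (Ioc m x ∩ S) + α (Ioc m x \ S) := by
        rw [hinter]
        exact add_le_add_left (mul_measure_lt_levelFun_sdiff_le (isLowerSet_Iic m) r) _
    _ = α (Ioc m x) := measure_inter_add_sdiff _ hSm
    _ ≤ (r + ε) * β (Ioc m x) := h
    _ = r * β (Ioc m x ∩ S) + (r * β (Ioc m x \ S) + ε * β (Ioc m x)) := by
        rw [add_mul, ← add_assoc, ← mul_add, measure_inter_add_sdiff _ hSm]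

theorem measure_Iic_sdiff_lt_levelFun_le_add [NullSingletonClass α] [NullSingletonClass β]
    (hα0 : α (Iic 0) = 0) (hβ0 : β (Iic 0) = 0) (hα : α (Iic x) ≠ ∞) (hβ : β (Iic x) ≠ ∞)
    (hr : r ≠ ∞) {ε : ℝ≥0∞} (hε : ε ≠ 0) (hε_top : ε ≠ ∞) :
    α (Iic x \ {t | r < levelFun α β t}) ≤
      r * β (Iic x \ {t | r < levelFun α β t}) + ε * β (Iic x) := by
  set S := {t | r < levelFun α β t}
  rcases le_total x 0 with hx | hx
  · rw [measure_mono_null (sdiff_subset.trans (Iic_subset_Iic.2 hx)) hα0]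
    exact zero_le
  by_cases hxS : x ∈ S
  · have hxS' : Iic x ⊆ S := fun t ht => isLowerSet_lt_levelFun r ht hxS
    rw [sdiff_eq_empty.2 hxS', measure_empty]
    exact zero_le
  obtain ⟨m, hmx, hm, hmle⟩ := exists_isRecord_measure_Ioc_le hβ0 hα hβ hx
    (ENNReal.add_ne_top.2 ⟨hr, hε_top⟩)
  have hcover : Iic x \ S ⊆ {m} ∪ Ioc m x \ S := fun t ht => by
    rcases lt_trichotomy t m with htm | rfl | hmt
    · exact (ht.2 (lt_levelFun_iff.2 ⟨r + ε, ENNReal.lt_add_right hr hε, m, htm, hm⟩)).elim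
    exacts [Or.inl rfl, Or.inr ⟨⟨hmt, ht.1⟩, ht.2⟩]
  calc α (Iic x \ S)
      ≤ α (Ioc m x \ S) := (measure_mono hcover).trans <| (measure_union_le _ _).trans_eq <| by
        rw [measure_singleton, zero_add]
    _ ≤ r * β (Ioc m x \ S) + ε * β (Ioc m x) :=
        measure_Ioc_sdiff_lt_levelFun_le_add hβ hr (fun t ht =>
          le_of_not_ge fun hxt => hxS (isLowerSet_lt_levelFun r hxt ht)) hmle
    _ ≤ r * β (Iic x \ S) + ε * β (Iic x) := by gcongr <;> exact Ioc_subset_Iic_self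

theorem measure_sdiff_lt_levelFun_le_mul [NullSingletonClass α] [NullSingletonClass β]
    (hα0 : α (Iic 0) = 0) (hβ0 : β (Iic 0) = 0) (hα : ∀ y, α (Iic y) ≠ ∞)
    (hβ : ∀ y, β (Iic y) ≠ ∞) {B : Set ℝ} (hB : IsLowerSet B) (hr : r ≠ ∞) :
    α (B \ {t | r < levelFun α β t}) ≤ r * β (B \ {t | r < levelFun α β t}) := by
  set S := {t | r < levelFun α β t}
  have hSm : MeasurableSet Sᶜ := (isLowerSet_lt_levelFun r).ordConnected.measurableSet.compl
  suffices h : α.restrict Sᶜ B ≤ r * β (B \ S) by rwa [Measure.restrict_apply' hSm] at h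
  refine measure_le_of_isLowerSet hB fun x hx => ?_
  rw [Measure.restrict_apply' hSm]
  have hlim : Tendsto (fun ε => r * β (B \ S) + ε * β (Iic x)) (nhdsWithin 0 (Ioi 0))
      (nhds (r * β (B \ S))) := by
    have := (ENNReal.Tendsto.mul_const (tendsto_id (x := nhds (0 : ℝ≥0∞)))
      (Or.inr (hβ x))).const_add (r * β (B \ S))
    simp only [zero_mul, add_zero] at this
    exact this.mono_left nhdsWithin_le_nhds
  refine ge_of_tendsto hlim ?_
  filter_upwards [self_mem_nhdsWithin, nhdsWithin_le_nhds (Iio_mem_nhds ENNReal.zero_lt_top)]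
    with ε hε hε_top
  refine (measure_Iic_sdiff_lt_levelFun_le_add hα0 hβ0 (hα x) (hβ x) hr (ne_of_gt hε)
    (ne_of_lt hε_top)).trans ?_
  gcongr
  exact fun t ht => hB ht hx

end LevelFunction

theorem mul_rpow_le_of_mul_le_mul_rpow {p q : ℝ} (hpq : p.HolderConjugate q) {s b M : ℝ≥0∞}
    (hb : b ≠ ∞) (h : s * b ≤ M * b ^ (1 / p)) : s * b ^ (1 / q) ≤ M := by
  rcases eq_or_ne b 0 with rfl | hb0
  · simp only [ENNReal.zero_rpow_of_pos hpq.symm.one_div_pos, mul_zero, zero_le]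
  · have hexp : 1 / q = 1 + -(1 / p) := by
      rw [one_div, one_div, ← hpq.one_sub_inv, sub_eq_add_neg]
    calc s * b ^ (1 / q) = s * b * b ^ (-(1 / p)) := by
          rw [hexp, ENNReal.rpow_add _ _ hb0 hb, ENNReal.rpow_one, mul_assoc]
      _ ≤ M * b ^ (1 / p) * b ^ (-(1 / p)) := mul_le_mul_left h _
      _ = M := by
          rw [mul_assoc, ← ENNReal.rpow_add _ _ hb0 hb, add_neg_cancel, ENNReal.rpow_zero, mul_one]

/-- Integration against `α` is bounded by `M` on the decreasing functions in the unit ball of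
`L^p(β)`. Only finite functions are tested, so that they can be realised as rearrangements of
real-valued ones. -/
def AntitoneDualBound (α β : Measure ℝ) (p : ℝ) (M : ℝ≥0∞) : Prop :=
  ∀ k : ℝ → ℝ≥0∞, Antitone k → (∀ t, k t ≠ ∞) → ∫⁻ t, k t ^ p ∂β ≤ 1 → ∫⁻ t, k t ∂α ≤ M

section Duality

variable {α β : Measure ℝ} {p q : ℝ} {M : ℝ≥0∞}

theorem lintegral_le_mul_rpow_of_antitoneDualBound (hp : 0 < p)
    (hdual : AntitoneDualBound α β p M)
    {k : ℝ → ℝ≥0∞} (hk : Antitone k) (hk_top : ∀ t, k t ≠ ∞) {E : ℝ≥0∞} (hE : E ≠ 0)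
    (hE_top : E ≠ ∞) (hkE : ∫⁻ t, k t ^ p ∂β ≤ E) : ∫⁻ t, k t ∂α ≤ M * E ^ (1 / p) := by
  set c := E ^ (-(1 / p))
  have hcE : c * E ^ (1 / p) = 1 := by
    rw [← ENNReal.rpow_add _ _ hE hE_top, neg_add_cancel, ENNReal.rpow_zero]
  have hcp : c ^ p = E⁻¹ := by
    rw [← ENNReal.rpow_mul, neg_mul, one_div_mul_cancel hp.ne', ENNReal.rpow_neg_one]
  have hscaled : ∫⁻ t, c * k t ∂α ≤ M := by
    refine hdual _ (hk.const_mul' c) (fun t => ENNReal.mul_ne_top ?_ (hk_top t)) ?_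
    · exact ENNReal.rpow_ne_top_of_ne_zero hE hE_top
    · simp only [ENNReal.mul_rpow_of_nonneg _ _ hp.le]
      rw [lintegral_const_mul _ (hk.measurable.pow_const p), hcp]
      exact (mul_le_mul_right hkE _).trans_eq (ENNReal.inv_mul_cancel hE hE_top)
  rw [lintegral_const_mul _ hk.measurable] at hscaled
  calc ∫⁻ t, k t ∂α = c * (∫⁻ t, k t ∂α) * E ^ (1 / p) := by
        rw [mul_right_comm, hcE, one_mul]
    _ ≤ M * E ^ (1 / p) := mul_le_mul_left hscaled _

theorem measure_le_mul_rpow_of_antitoneDualBound (hp : 0 < p)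
    (hdual : AntitoneDualBound α β p M)
    {S : Set ℝ} (hS : IsLowerSet S) {E : ℝ≥0∞} (hE : E ≠ 0) (hE_top : E ≠ ∞) (hSE : β S ≤ E) :
    α S ≤ M * E ^ (1 / p) := by
  have hSm : MeasurableSet S := hS.ordConnected.measurableSet
  have hanti : Antitone (S.indicator (1 : ℝ → ℝ≥0∞)) := fun x y hxy => by
    by_cases hy : y ∈ S
    · rw [indicator_of_mem hy, indicator_of_mem (hS hxy hy)]
      rfl
    · rw [indicator_of_notMem hy]
      exact zero_le
  have hpow : ∀ t, S.indicator (1 : ℝ → ℝ≥0∞) t ^ p = S.indicator 1 t := fun t => by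
    by_cases ht : t ∈ S <;> simp [ht, hp]
  rw [← lintegral_indicator_one hSm]
  refine lintegral_le_mul_rpow_of_antitoneDualBound hp hdual hanti (fun t => ?_) hE hE_top ?_
  · by_cases ht : t ∈ S <;> simp [ht]
  · rwa [lintegral_congr hpow, lintegral_indicator_one hSm]

theorem measure_Iic_ne_top_of_antitoneDualBound (hp : 0 < p) (hM : M ≠ ∞)
    (hdual : AntitoneDualBound α β p M) {y : ℝ} (hβ : β (Iic y) ≠ ∞) : α (Iic y) ≠ ∞ := by
  have hE : β (Iic y) + 1 ≠ ∞ := ENNReal.add_ne_top.2 ⟨hβ, ENNReal.one_ne_top⟩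
  exact ne_top_of_le_ne_top
    (ENNReal.mul_ne_top hM (ENNReal.rpow_ne_top_of_nonneg (one_div_pos.2 hp).le hE))
    (measure_le_mul_rpow_of_antitoneDualBound hp hdual (isLowerSet_Iic y) (by simp) hE le_self_add)

theorem levelFun_mul_rpow_le (hpq : p.HolderConjugate q) (hdual : AntitoneDualBound α β p M)
    (hβ : ∀ y, β (Iic y) ≠ ∞) (t : ℝ) : levelFun α β t * β (Iic t) ^ (1 / q) ≤ M := by
  rw [levelFun, ENNReal.sSup_mul]
  refine iSup₂_le fun r ⟨y, hty, hy⟩ => ?_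
  calc r * β (Iic t) ^ (1 / q)
      ≤ r * β (Iic y) ^ (1 / q) := mul_le_mul_right (ENNReal.rpow_le_rpow
        (measure_mono (Iic_subset_Iic.2 hty.le)) hpq.symm.one_div_nonneg) r
    _ ≤ M := mul_rpow_le_of_mul_le_mul_rpow hpq (hβ y) ?_
  rcases eq_or_ne (β (Iic y)) 0 with hy0 | hy0
  · simp only [hy0, mul_zero, zero_le]
  · calc r * β (Iic y) ≤ α (Iic y) := by simpa only [sdiff_empty] using hy ∅ isLowerSet_empty
      _ ≤ M * β (Iic y) ^ (1 / p) :=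
        measure_le_mul_rpow_of_antitoneDualBound hpq.pos hdual (isLowerSet_Iic y) hy0 (hβ y) le_rfl

theorem levelFun_ne_top (hpq : p.HolderConjugate q) (hM : M ≠ ∞)
    (hdual : AntitoneDualBound α β p M) (hβ : ∀ y, β (Iic y) ≠ ∞) {t : ℝ} (ht : β (Iic t) ≠ 0) :
    levelFun α β t ≠ ∞ := fun htop => by
  have hle := levelFun_mul_rpow_le hpq hdual hβ t
  rw [htop, ENNReal.top_mul (ENNReal.rpow_pos_of_nonneg (pos_iff_ne_zero.2 ht)
    hpq.symm.one_div_nonneg).ne', top_le_iff] at hle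
  exact hM hle

theorem measure_lt_levelFun_ne_top (hpq : p.HolderConjugate q) (hM : M ≠ ∞)
    (hdual : AntitoneDualBound α β p M) (hβ : ∀ y, β (Iic y) ≠ ∞) {s : ℝ≥0∞} (hs : s ≠ 0) :
    β {t | s < levelFun α β t} ≠ ∞ := by
  refine ne_top_of_le_ne_top (b := (M / s) ^ q)
    (ENNReal.rpow_ne_top_of_nonneg hpq.symm.nonneg (ENNReal.div_ne_top hM hs)) <|
    measure_le_of_isLowerSet (isLowerSet_lt_levelFun s) fun t ht => ?_
  rw [← ENNReal.rpow_inv_le_iff hpq.symm.pos, ← one_div,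
    ENNReal.le_div_iff_mul_le (Or.inl hs) (Or.inr hM), mul_comm]
  exact (mul_le_mul_left (le_of_lt ht) _).trans (levelFun_mul_rpow_le hpq hdual hβ t)

theorem measure_levelFun_eq_zero [NullSingletonClass α] [NullSingletonClass β]
    (hα0 : α (Iic 0) = 0) (hβ0 : β (Iic 0) = 0) (hα : ∀ y, α (Iic y) ≠ ∞)
    (hβ : ∀ y, β (Iic y) ≠ ∞) : α {t | levelFun α β t = 0} = 0 := by
  have h := measure_sdiff_lt_levelFun_le_mul hα0 hβ0 hα hβ isLowerSet_univ ENNReal.zero_ne_top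
  rw [zero_mul, nonpos_iff_eq_zero] at h
  exact measure_mono_null (fun t ht => mem_sdiff_of_mem (mem_univ t) fun hpos => ne_of_gt hpos ht) h

theorem setLIntegral_Iic_levelFun_inv_le [NullSingletonClass α] [NullSingletonClass β]
    (hα0 : α (Iic 0) = 0) (hβ0 : β (Iic 0) = 0) (hα : ∀ y, α (Iic y) ≠ ∞)
    (hβ : ∀ y, β (Iic y) ≠ ∞) (x : ℝ) :
    ∫⁻ t in Iic x, (levelFun α β t)⁻¹ ∂α ≤ β (Iic x) := by
  set lam := levelFun α β
  have hlam : Measurable lam := (antitone_levelFun α β).measurable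
  have hslice : ∀ c s : ℝ≥0∞, 1 < c → c ≠ ∞ → s ≠ 0 → s ≠ ∞ →
      α.restrict (Iic x) (lam ⁻¹' Ioc s (c * s)) ≤
        c * s ^ (1 : ℝ) * β.restrict (Iic x) (lam ⁻¹' Ioc s (c * s)) := by
    intro c s _ hc_top _ hs_top
    have hset : lam ⁻¹' Ioc s (c * s) ∩ Iic x =
        ({t | s < lam t} ∩ Iic x) \ {t | c * s < lam t} := by
      ext t
      exact ⟨fun ⟨⟨h₁, h₂⟩, h₃⟩ => ⟨⟨h₁, h₃⟩, h₂.not_gt⟩,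
        fun ⟨⟨h₁, h₃⟩, h₂⟩ => ⟨⟨h₁, not_lt.1 h₂⟩, h₃⟩⟩
    rw [Measure.restrict_apply (hlam measurableSet_Ioc),
      Measure.restrict_apply (hlam measurableSet_Ioc), ENNReal.rpow_one, hset]
    exact measure_sdiff_lt_levelFun_le_mul hα0 hβ0 hα hβ
      ((isLowerSet_lt_levelFun s).inter (isLowerSet_Iic x)) (ENNReal.mul_ne_top hc_top hs_top)
  have hsupp : ∀ᵐ t ∂α.restrict (Iic x),
      (lam t)⁻¹ ≤ (lam ⁻¹' Ioo 0 ∞).indicator (fun t => lam t ^ (-1 : ℝ)) t := by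
    have hpos : ∀ᵐ t ∂α, lam t ≠ 0 := measure_eq_zero_iff_ae_notMem.1
      (measure_levelFun_eq_zero hα0 hβ0 hα hβ)
    filter_upwards [ae_restrict_of_ae hpos] with t ht
    rcases eq_or_ne (lam t) ∞ with htop | htop
    · simp [htop]
    · have hmem : t ∈ lam ⁻¹' Ioo 0 ∞ := ⟨pos_iff_ne_zero.2 ht, htop.lt_top⟩
      rw [indicator_of_mem hmem, ENNReal.rpow_neg_one]
  calc ∫⁻ t in Iic x, (lam t)⁻¹ ∂α
      ≤ ∫⁻ t in lam ⁻¹' Ioo 0 ∞, lam t ^ (-1 : ℝ) ∂α.restrict (Iic x) := by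
        rw [← lintegral_indicator (hlam measurableSet_Ioo)]
        exact lintegral_mono_ae hsupp
    _ ≤ ∫⁻ t in lam ⁻¹' Ioo 0 ∞, lam t ^ (-1 + 1 : ℝ) ∂β.restrict (Iic x) :=
        setLIntegral_rpow_le_of_measure_preimage_Ioc_le hlam hslice (-1)
    _ ≤ β (Iic x) := by
        simp only [neg_add_cancel, ENNReal.rpow_zero]
        rw [setLIntegral_one]
        exact (measure_mono (subset_univ _)).trans_eq (Measure.restrict_apply_univ _)

theorem lintegral_rpow_sub_one_le_of_antitoneDualBound (hpq : p.HolderConjugate q) (hM : M ≠ ∞)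
    (hdual : AntitoneDualBound α β p M) {ρ : ℝ → ℝ≥0∞} (hρ : Antitone ρ) (hρ_top : ∀ t, ρ t ≠ ∞)
    (h : ∀ s u, s * β (ρ ⁻¹' Ioc s u) ≤ α (ρ ⁻¹' Ioc s u)) (hE : ∫⁻ t, ρ t ^ q ∂β ≠ ∞) :
    ∫⁻ t, ρ t ^ (q - 1) ∂α ≤ M ^ q := by
  have hbound : ∀ E : ℝ≥0∞, E ≠ 0 → E ≠ ∞ → ∫⁻ t, ρ t ^ q ∂β ≤ E →
      ∫⁻ t, ρ t ^ (q - 1) ∂α ≤ M * E ^ (1 / p) := fun E hE0 hE_top hqE =>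
    lintegral_le_mul_rpow_of_antitoneDualBound hpq.pos hdual
      (fun x y hxy => ENNReal.rpow_le_rpow (hρ hxy) hpq.symm.sub_one_pos.le)
      (fun t => ENNReal.rpow_ne_top_of_nonneg hpq.symm.sub_one_pos.le (hρ_top t)) hE0 hE_top
      (by simpa only [← ENNReal.rpow_mul, hpq.symm.sub_one_mul_conj] using hqE)
  have hE1 : (∫⁻ t, ρ t ^ q ∂β) + 1 ≠ ∞ := ENNReal.add_ne_top.2 ⟨hE, ENNReal.one_ne_top⟩
  set J := ∫⁻ t, ρ t ^ (q - 1) ∂α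
  have hJ : J ≠ ∞ := ne_top_of_le_ne_top
    (ENNReal.mul_ne_top hM (ENNReal.rpow_ne_top_of_nonneg hpq.one_div_nonneg hE1))
    (hbound _ (by simp) hE1 le_self_add)
  rcases eq_or_ne J 0 with hJ0 | hJ0
  · simp only [hJ0, zero_le]
  · have hJM : 1 * J ≤ M * J ^ (1 / p) := (one_mul J).trans_le <| hbound J hJ0 hJ <|
      lintegral_rpow_le_lintegral_rpow_sub_one hρ.measurable hρ_top hpq.symm.pos h
    rw [← ENNReal.rpow_inv_le_iff hpq.symm.pos, ← one_div]
    simpa only [one_mul] using mul_rpow_le_of_mul_le_mul_rpow hpq hJ hJM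

theorem antitone_min_levelFun_tsub (n ε : ℝ≥0∞) :
    Antitone fun t => min (levelFun α β t) n - ε :=
  fun _ _ hxy => tsub_le_tsub_right (min_le_min_right n (antitone_levelFun α β hxy)) ε

theorem mul_measure_preimage_min_levelFun_tsub_le [NullSingletonClass α] (n ε s u : ℝ≥0∞) :
    s * β ((fun t => min (levelFun α β t) n - ε) ⁻¹' Ioc s u) ≤
      α ((fun t => min (levelFun α β t) n - ε) ⁻¹' Ioc s u) := by
  set ρ := fun t => min (levelFun α β t) n - ε
  have hlt : ∀ t, s < ρ t ↔ s + ε < levelFun α β t ∧ s + ε < n := fun t => by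
    rw [lt_tsub_iff_right, lt_min_iff]
  rcases lt_or_ge (s + ε) n with hn | hn
  · have hset : ρ ⁻¹' Ioc s u = {t | s + ε < levelFun α β t} \ {t | u < ρ t} := by
      ext t
      simp only [mem_preimage, mem_Ioc, hlt, hn, and_true, Set.mem_sdiff, mem_ofPred_eq, not_lt]
    rw [hset]
    exact (mul_le_mul_left le_self_add _).trans (mul_measure_lt_levelFun_sdiff_le
      (isLowerSet_lt_antitone (antitone_min_levelFun_tsub n ε) u) _)
  · have hset : ρ ⁻¹' Ioc s u = ∅ :=
      eq_empty_of_forall_notMem fun t ht => ((hlt t).1 ht.1).2.not_ge hn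
    rw [hset, measure_empty, mul_zero]
    exact zero_le

theorem lintegral_min_levelFun_tsub_rpow_ne_top (hpq : p.HolderConjugate q) (hM : M ≠ ∞)
    (hdual : AntitoneDualBound α β p M) (hβ : ∀ y, β (Iic y) ≠ ∞) {n ε : ℝ≥0∞} (hn : n ≠ ∞)
    (hε : ε ≠ 0) : ∫⁻ t, (min (levelFun α β t) n - ε) ^ q ∂β ≠ ∞ := by
  set S := {t | ε < levelFun α β t}
  have hSm : MeasurableSet S := (isLowerSet_lt_levelFun ε).ordConnected.measurableSet
  have hle : ∀ t, (min (levelFun α β t) n - ε) ^ q ≤ S.indicator (fun _ => n ^ q) t := fun t => by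
    by_cases ht : t ∈ S
    · rw [indicator_of_mem ht]
      exact ENNReal.rpow_le_rpow (tsub_le_self.trans (min_le_right _ _)) hpq.symm.nonneg
    · rw [tsub_eq_zero_of_le ((min_le_left _ _).trans (not_lt.1 ht)),
        ENNReal.zero_rpow_of_pos hpq.symm.pos]
      exact zero_le
  refine ne_top_of_le_ne_top ?_ (lintegral_mono hle)
  rw [lintegral_indicator_const hSm]
  exact ENNReal.mul_ne_top (ENNReal.rpow_ne_top_of_nonneg hpq.symm.nonneg hn)
    (measure_lt_levelFun_ne_top hpq hM hdual hβ hε)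

theorem lintegral_levelFun_rpow_le [NullSingletonClass α] (hpq : p.HolderConjugate q)
    (hM : M ≠ ∞) (hdual : AntitoneDualBound α β p M) (hβ : ∀ y, β (Iic y) ≠ ∞) :
    ∫⁻ t, levelFun α β t ^ (q - 1) ∂α ≤ M ^ q := by
  have hq : 0 ≤ q - 1 := hpq.symm.sub_one_pos.le
  set ρ : ℕ → ℝ → ℝ≥0∞ := fun n t => min (levelFun α β t) n - (n : ℝ≥0∞)⁻¹
  have hρ_anti : ∀ n, Antitone (ρ n) := fun n => antitone_min_levelFun_tsub _ _
  have hρ_mono : ∀ t, Monotone fun n => ρ n t := fun t m n hmn =>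
    tsub_le_tsub (min_le_min_left _ (Nat.cast_le.2 hmn)) (ENNReal.inv_le_inv.2 (Nat.cast_le.2 hmn))
  have hlim : ∀ t, Tendsto (fun n => ρ n t) atTop (nhds (levelFun α β t)) := fun t => by
    simpa only [min_eq_left le_top, tsub_zero] using ENNReal.Tendsto.sub
      (tendsto_const_nhds.min ENNReal.tendsto_nat_nhds_top) ENNReal.tendsto_inv_nat_nhds_zero
      (Or.inr ENNReal.zero_ne_top)
  refine le_of_tendsto' (lintegral_tendsto_of_tendsto_of_monotone
    (fun n => ((hρ_anti n).measurable.pow_const (q - 1)).aemeasurable)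
    (Eventually.of_forall fun t m n hmn => ENNReal.rpow_le_rpow (hρ_mono t hmn) hq)
    (Eventually.of_forall fun t => (ENNReal.continuous_rpow_const.tendsto _).comp (hlim t)))
    fun n => ?_
  exact lintegral_rpow_sub_one_le_of_antitoneDualBound hpq hM hdual (hρ_anti n)
    (fun t => ne_top_of_le_ne_top (ENNReal.natCast_ne_top n)
      (tsub_le_self.trans (min_le_right _ _)))
    (mul_measure_preimage_min_levelFun_tsub_le _ _)
    (lintegral_min_levelFun_tsub_rpow_ne_top hpq hM hdual hβ (ENNReal.natCast_ne_top n)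
      (ENNReal.inv_ne_zero.2 (ENNReal.natCast_ne_top n)))

end Duality

section DecreasingDensities

variable {a : ℝ≥0∞} {φ ψ k : ℝ → ℝ≥0∞} {r s : ℝ≥0∞} {t x y z : ℝ}

theorem withDensity_volI_Iic_zero (a : ℝ≥0∞) (k : ℝ → ℝ≥0∞) :
    (volI a).withDensity k (Iic 0) = 0 :=
  have hsub : Iic 0 ⊆ (Iset a)ᶜ := fun _ ht hta => hta.1.not_ge ht
  measure_mono_null hsub (withDensity_volI_compl_Iset a k)

theorem withDensity_volI_Ioc (k : ℝ → ℝ≥0∞) (hx : 0 ≤ x) (hy : y ∈ Iset a) :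
    (volI a).withDensity k (Ioc x y) = ∫⁻ t in Ioc x y, k t := by
  rw [withDensity_apply _ measurableSet_Ioc, volI, Measure.restrict_restrict measurableSet_Ioc,
    inter_eq_left.2 fun t ht => mem_Iset_of_le (hx.trans_lt ht.1) ht.2 hy]

theorem mul_ofReal_sub_le_withDensity_volI_Ioc (hk : AntitoneOn k (Iset a)) (hx : 0 ≤ x)
    (hyz : y ≤ z) (hz : z ∈ Iset a) :
    k z * ENNReal.ofReal (y - x) ≤ (volI a).withDensity k (Ioc x y) := by
  rcases le_or_gt y x with hyx | hxy
  · rw [ENNReal.ofReal_of_nonpos (sub_nonpos.2 hyx), mul_zero]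
    exact zero_le
  · have hmem : ∀ t ∈ Ioc x y, t ∈ Iset a := fun t ht =>
      mem_Iset_of_le (hx.trans_lt ht.1) (ht.2.trans hyz) hz
    rw [withDensity_volI_Ioc k hx (hmem y ⟨hxy, le_rfl⟩), ← Real.volume_Ioc, ← setLIntegral_const]
    exact setLIntegral_mono' measurableSet_Ioc fun t ht => hk (hmem t ht) hz (ht.2.trans hyz)

theorem withDensity_volI_Ioc_le_mul_ofReal_sub (hk : AntitoneOn k (Iset a)) (hx : x ∈ Iset a) :
    (volI a).withDensity k (Ioc x y) ≤ k x * ENNReal.ofReal (y - x) := by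
  rw [withDensity_apply _ measurableSet_Ioc, volI, Measure.restrict_restrict measurableSet_Ioc]
  calc ∫⁻ t in Ioc x y ∩ Iset a, k t
      ≤ ∫⁻ _ in Ioc x y ∩ Iset a, k x :=
        setLIntegral_mono' (measurableSet_Ioc.inter (measurableSet_Iset a)) fun _ ht =>
          hk hx ht.2 ht.1.1.le
    _ = k x * volume (Ioc x y ∩ Iset a) := setLIntegral_const _ _
    _ ≤ k x * ENNReal.ofReal (y - x) := by
        rw [← Real.volume_Ioc]
        gcongr
        exact inter_subset_left

theorem withDensity_volI_Iic_ne_zero (hk : AntitoneOn k (Iset a)) (hx : x ∈ Iset a)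
    (hkx : k x ≠ 0) : (volI a).withDensity k (Iic x) ≠ 0 := by
  have hle := (mul_ofReal_sub_le_withDensity_volI_Ioc hk le_rfl le_rfl hx).trans
    (measure_mono Ioc_subset_Iic_self)
  rw [sub_zero] at hle
  exact ((pos_iff_ne_zero.2 (mul_ne_zero hkx (ENNReal.ofReal_pos.2 hx.1).ne')).trans_le hle).ne'

theorem ne_top_of_withDensity_volI_Iic_ne_top (hk : AntitoneOn k (Iset a)) (hx : x ∈ Iset a)
    (h : (volI a).withDensity k (Iic x) ≠ ∞) : k x ≠ ∞ := by
  have hle := (mul_ofReal_sub_le_withDensity_volI_Ioc hk le_rfl le_rfl hx).trans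
    (measure_mono Ioc_subset_Iic_self)
  intro htop
  rw [sub_zero, htop, ENNReal.top_mul (ENNReal.ofReal_pos.2 hx.1).ne', top_le_iff] at hle
  exact h hle

theorem withDensity_volI_Iic_ne_top (hk : AntitoneOn k (Iset a)) (hk_top : ∀ x ∈ Iset a, k x ≠ ∞)
    (h : ∀ x ∈ Iset a, ∫⁻ t in Ioo 0 x, k t ≠ ∞) (y : ℝ) :
    (volI a).withDensity k (Iic y) ≠ ∞ := by
  rcases (Iset a).eq_empty_or_nonempty with hempty | ⟨x, hx⟩
  · simp [volI, hempty]
  · have hle : (volI a).withDensity k (Iic y) ≤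
        (volI a).withDensity k (Iic x) + (volI a).withDensity k (Ioc x y) :=
      (measure_mono fun t ht => (le_or_gt t x).imp id fun hxt => ⟨hxt, ht⟩).trans
        (measure_union_le _ _)
    refine ne_top_of_le_ne_top (ENNReal.add_ne_top.2 ⟨?_, ?_⟩) hle
    · rw [withDensity_volI_Iic k hx]
      exact h x hx
    · exact ne_top_of_le_ne_top (ENNReal.mul_ne_top (hk_top x hx) ENNReal.ofReal_ne_top)
        (withDensity_volI_Ioc_le_mul_ofReal_sub hk hx)

theorem mul_le_of_isRecord_withDensity (hφ : AntitoneOn φ (Iset a)) (hψ : AntitoneOn ψ (Iset a))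
    (hy : IsRecord ((volI a).withDensity φ) ((volI a).withDensity ψ) r y)
    (ht : t ∈ Iset a) (hty : t < y) (hyz : y ≤ z) (hz : z ∈ Iset a) : r * ψ z ≤ φ t := by
  have hlen : ENNReal.ofReal (y - t) ≠ 0 := (ENNReal.ofReal_pos.2 (sub_pos.2 hty)).ne'
  rw [← ENNReal.mul_le_mul_iff_left hlen ENNReal.ofReal_ne_top]
  calc r * ψ z * ENNReal.ofReal (y - t)
      ≤ r * (volI a).withDensity ψ (Ioc t y) := by
        rw [mul_assoc]
        exact mul_le_mul_right (mul_ofReal_sub_le_withDensity_volI_Ioc hψ ht.1.le hyz hz) r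
    _ ≤ (volI a).withDensity φ (Ioc t y) := by
        simpa only [Iic_sdiff_Iic] using hy (Iic t) (isLowerSet_Iic t)
    _ ≤ φ t * ENNReal.ofReal (y - t) := withDensity_volI_Ioc_le_mul_ofReal_sub hφ ht

theorem isRecord_withDensity_of_forall_Ioc
    (hy : IsRecord ((volI a).withDensity φ) ((volI a).withDensity ψ) r y) (hyz : y ≤ z)
    (h : ∀ x ∈ Ioc y z, x ∈ Iset a → r * ψ x ≤ φ x) :
    IsRecord ((volI a).withDensity φ) ((volI a).withDensity ψ) r z := by
  intro B hB
  have hBm : MeasurableSet B := hB.ordConnected.measurableSet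
  have hsplit : ∀ μ : Measure ℝ, μ (Iic z \ B) = μ (Iic y \ B) + μ (Ioc y z \ B) := fun μ => by
    rw [← measure_union ((Iic_disjoint_Ioc le_rfl).mono sdiff_subset sdiff_subset)
      (measurableSet_Ioc.diff hBm), ← union_sdiff_distrib, Iic_union_Ioc_eq_Iic hyz]
  have hIoc : r * (volI a).withDensity ψ (Ioc y z \ B) ≤
      (volI a).withDensity φ (Ioc y z \ B) := by
    have hm : MeasurableSet (Ioc y z \ B) := measurableSet_Ioc.diff hBm
    rw [withDensity_apply _ hm, withDensity_apply _ hm, volI, Measure.restrict_restrict hm]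
    exact (lintegral_const_mul_le _ _).trans <|
      setLIntegral_mono' (hm.inter (measurableSet_Iset a)) fun x hx => h x hx.1.1 hx.2
  rw [hsplit, hsplit, mul_add]
  exact add_le_add (hy B hB) hIoc

theorem mul_le_mul_of_levelFun_withDensity (hφ : Antitone φ)
    (hφ_right : ∀ x ∈ Iset a, ∀ c < φ x, ∃ y > x, c < φ y) (hψ : AntitoneOn ψ (Iset a))
    {r' : ℝ≥0∞} (hx : x ∈ Iset a) (hy : y ∈ Iset a) (hxy : x ≤ y)
    (hr : r < levelFun ((volI a).withDensity φ) ((volI a).withDensity ψ) x)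
    (hr' : levelFun ((volI a).withDensity φ) ((volI a).withDensity ψ) y < r') (hs : s < φ y) :
    r * s ≤ r' * φ x := by
  by_contra! hlt
  have hr'r : r' < r := lt_of_not_ge fun hrr' => hlt.not_ge (by
    gcongr
    exact hs.le.trans (hφ hxy))
  obtain ⟨r₁, hrr₁, z, hxz, hz⟩ := lt_levelFun_iff.1 hr
  have hzr : IsRecord ((volI a).withDensity φ) ((volI a).withDensity ψ) r z := hz.mono hrr₁.le
  have hzy : z ≤ y := le_of_not_gt fun hyz =>
    (lt_levelFun_iff.2 ⟨r₁, hrr₁, z, hyz, hz⟩).not_ge (hr'.le.trans hr'r.le)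
  obtain ⟨u, hyu, hsu⟩ := hφ_right y hy s hs
  have hdens : ∀ ξ ∈ Ioc z u, ξ ∈ Iset a → r' * ψ ξ ≤ φ ξ := by
    intro ξ hξ hξa
    rw [← ENNReal.mul_le_mul_iff_right (bot_le.trans_lt hr'r).ne' (ne_top_of_lt hr)]
    calc r * (r' * ψ ξ) = r' * (r * ψ ξ) := mul_left_comm _ _ _
      _ ≤ r' * φ x := mul_le_mul_right
          (mul_le_of_isRecord_withDensity (hφ.antitoneOn _) hψ hzr hx hxz hξ.1.le hξa) r'
      _ ≤ r * s := hlt.le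
      _ ≤ r * φ ξ := mul_le_mul_right (hsu.le.trans (hφ hξ.2)) r
  have hu := isRecord_withDensity_of_forall_Ioc (hzr.mono hr'r.le) (hzy.trans hyu.le) hdens
  exact hr'.not_ge (le_sSup ⟨u, hyu, hu⟩)

end DecreasingDensities

/-- The density `φ / levelFun α β`, where `α` and `β` are the measures on `(0, a)` with densities
`φ` and `ψ`. For `φ = f*` and `ψ = w` it is the weight at which the infimum in the duality formula
is approached. Where the level function vanishes, so does `φ`, and the quotient is `0 / 0 = 0`. -/
noncomputable def levelWeight (a : ℝ≥0∞) (φ ψ : ℝ → ℝ≥0∞) (t : ℝ) : ℝ≥0∞ :=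
  φ t / levelFun ((volI a).withDensity φ) ((volI a).withDensity ψ) t

section LevelWeight

variable {a : ℝ≥0∞} {φ ψ : ℝ → ℝ≥0∞} {t x : ℝ}

theorem levelFun_withDensity_ne_zero (hφ : Antitone φ)
    (hφ_right : ∀ x ∈ Iset a, ∀ c < φ x, ∃ y > x, c < φ y)
    (hα : ∀ y, (volI a).withDensity φ (Iic y) ≠ ∞) (hβ : ∀ y, (volI a).withDensity ψ (Iic y) ≠ ∞)
    (hx : x ∈ Iset a) (hφx : φ x ≠ 0) :
    levelFun ((volI a).withDensity φ) ((volI a).withDensity ψ) x ≠ 0 := by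
  intro hzero
  obtain ⟨y, hxy, hφy⟩ := hφ_right x hx 0 (pos_iff_ne_zero.2 hφx)
  obtain ⟨z, hxz, hz⟩ := exists_gt_mem_Iset hx
  have hxu : x < min y z := lt_min hxy hxz
  have hu : min y z ∈ Iset a := mem_Iset_of_le (hx.1.trans hxu) (min_le_right y z) hz
  have hpos : 0 < φ (min y z) * ENNReal.ofReal (min y z - x) :=
    ENNReal.mul_pos (hφy.trans_le (hφ (min_le_left y z))).ne'
      (ENNReal.ofReal_pos.2 (sub_pos.2 hxu)).ne'
  have hnull : (volI a).withDensity φ (Ioc x (min y z)) = 0 := by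
    refine measure_mono_null (fun t ht => ?_) (measure_levelFun_eq_zero
      (withDensity_volI_Iic_zero a φ) (withDensity_volI_Iic_zero a ψ) hα hβ)
    exact nonpos_iff_eq_zero.1 ((antitone_levelFun _ _ ht.1.le).trans_eq hzero)
  exact hpos.not_ge ((mul_ofReal_sub_le_withDensity_volI_Ioc (hφ.antitoneOn _) hx.1.le le_rfl
    hu).trans_eq hnull)

theorem antitoneOn_levelWeight (hφ : Antitone φ)
    (hφ_right : ∀ x ∈ Iset a, ∀ c < φ x, ∃ y > x, c < φ y) (hψ : AntitoneOn ψ (Iset a))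
    (h_zero : ∀ x ∈ Iset a, φ x ≠ 0 →
      levelFun ((volI a).withDensity φ) ((volI a).withDensity ψ) x ≠ 0)
    (h_top : ∀ x ∈ Iset a, levelFun ((volI a).withDensity φ) ((volI a).withDensity ψ) x ≠ ∞) :
    AntitoneOn (levelWeight a φ ψ) (Iset a) := by
  intro x hx y hy hxy
  simp only [levelWeight]
  rcases eq_or_ne (φ y) 0 with hφy | hφy
  · rw [hφy, ENNReal.zero_div]
    exact zero_le
  have hφx : φ x ≠ 0 := ((pos_iff_ne_zero.2 hφy).trans_le (hφ hxy)).ne'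
  rw [ENNReal.div_le_iff (h_zero y hy hφy) (h_top y hy), mul_comm,
    ← mul_div_assoc, ENNReal.le_div_iff_mul_le (Or.inl (h_zero x hx hφx)) (Or.inl (h_top x hx)),
    mul_comm (φ y)]
  exact ENNReal.mul_le_of_forall_lt fun r hr s hs =>
    ENNReal.le_mul_of_forall_lt (Or.inl (h_zero y hy hφy)) (Or.inl (h_top y hy))
      fun r' hr' b hb =>
        (mul_le_mul_of_levelFun_withDensity hφ hφ_right hψ hx hy hxy hr hr' hs).trans
          (mul_le_mul_right (le_of_lt hb) r')

theorem levelFun_mul_levelWeight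
    (h_zero : φ t ≠ 0 → levelFun ((volI a).withDensity φ) ((volI a).withDensity ψ) t ≠ 0)
    (h_top : levelFun ((volI a).withDensity φ) ((volI a).withDensity ψ) t ≠ ∞) :
    levelFun ((volI a).withDensity φ) ((volI a).withDensity ψ) t * levelWeight a φ ψ t = φ t := by
  rcases eq_or_ne (φ t) 0 with hφt | hφt
  · rw [levelWeight, hφt, ENNReal.zero_div, mul_zero]
  · exact ENNReal.mul_div_cancel (h_zero hφt) h_top

theorem setLIntegral_levelWeight_le (hφ : Measurable φ)
    (hα : ∀ y, (volI a).withDensity φ (Iic y) ≠ ∞) (hβ : ∀ y, (volI a).withDensity ψ (Iic y) ≠ ∞)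
    (hx : x ∈ Iset a) :
    ∫⁻ t in Ioo 0 x, levelWeight a φ ψ t ≤ ∫⁻ t in Ioo 0 x, ψ t := by
  have hlam := (antitone_levelFun ((volI a).withDensity φ) ((volI a).withDensity ψ)).measurable
  calc ∫⁻ t in Ioo 0 x, levelWeight a φ ψ t
      = ∫⁻ t in Iic x, levelWeight a φ ψ t ∂volI a := by
        rw [← withDensity_volI_Iic _ hx, withDensity_apply _ measurableSet_Iic]
    _ = ∫⁻ t in Iic x, (levelFun ((volI a).withDensity φ) ((volI a).withDensity ψ) t)⁻¹
          ∂(volI a).withDensity φ :=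
        (setLIntegral_withDensity_eq_setLIntegral_mul _ hφ hlam.inv measurableSet_Iic).symm
    _ ≤ (volI a).withDensity ψ (Iic x) := setLIntegral_Iic_levelFun_inv_le
        (withDensity_volI_Iic_zero a φ) (withDensity_volI_Iic_zero a ψ) hα hβ x
    _ = ∫⁻ t in Ioo 0 x, ψ t := withDensity_volI_Iic ψ hx

end LevelWeight

theorem rpow_mul_rpow_one_sub_le {q : ℝ} (hq : 1 ≤ q) {F K V : ℝ≥0∞} (hV : V ≠ 0) (hV_top : V ≠ ∞)
    (h : F ≤ K * V) : F ^ q * V ^ (1 - q) ≤ F * K ^ (q - 1) := by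
  have hq' : 0 ≤ q - 1 := sub_nonneg.2 hq
  have hF : F ^ q = F * F ^ (q - 1) := by
    simpa only [add_sub_cancel, ENNReal.rpow_one] using
      ENNReal.rpow_add_of_nonneg (x := F) 1 (q - 1) zero_le_one hq'
  calc F ^ q * V ^ (1 - q) = F * (F ^ (q - 1) * V ^ (1 - q)) := by rw [hF, mul_assoc]
    _ ≤ F * ((K * V) ^ (q - 1) * V ^ (1 - q)) := by gcongr
    _ = F * K ^ (q - 1) := by
        rw [ENNReal.mul_rpow_of_nonneg _ _ hq', mul_assoc, ← ENNReal.rpow_add _ _ hV hV_top,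
          sub_add_sub_cancel, sub_self, ENNReal.rpow_zero, mul_one]

/-- Mixing in a small multiple of `w` makes a submajorized density strictly positive. -/
theorem exists_pos_weight_le_mul {a : ℝ≥0∞} {u : ℝ → ℝ≥0∞} {w : ℝ → ℝ} (hu : Measurable u)
    (hu_anti : AntitoneOn u (Iset a)) (hu_top : ∀ t ∈ Iset a, u t ≠ ∞)
    (hw_pos : ∀ t ∈ Iset a, 0 < w t) (hw : AntitoneOn w (Iset a))
    (huw : ∀ x ∈ Iset a, ∫⁻ t in Ioo 0 x, u t ≤ ∫⁻ t in Ioo 0 x, ENNReal.ofReal (w t))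
    {c : ℝ≥0∞} (hc : 1 < c) (hc_top : c ≠ ∞) :
    ∃ v : ℝ → ℝ, (∀ t ∈ Iset a, 0 < v t) ∧ AntitoneOn v (Iset a) ∧
      (∀ x ∈ Iset a, ∫⁻ t in Ioo 0 x, ENNReal.ofReal (v t) ≤
        ∫⁻ t in Ioo 0 x, ENNReal.ofReal (w t)) ∧
      ∀ t ∈ Iset a, u t ≤ c * ENNReal.ofReal (v t) := by
  have hc0 : c ≠ 0 := (zero_lt_one.trans hc).ne'
  have hc_inv : c⁻¹ < 1 := ENNReal.inv_lt_one.2 hc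
  have hd_top : 1 - c⁻¹ ≠ ∞ := ENNReal.sub_ne_top ENNReal.one_ne_top
  set V : ℝ → ℝ≥0∞ := fun t => c⁻¹ * u t + (1 - c⁻¹) * ENNReal.ofReal (w t) with hV
  have hV_top : ∀ t ∈ Iset a, V t ≠ ∞ := fun t ht => ENNReal.add_ne_top.2
    ⟨ENNReal.mul_ne_top (ENNReal.inv_ne_top.2 hc0) (hu_top t ht),
      ENNReal.mul_ne_top hd_top ENNReal.ofReal_ne_top⟩
  refine ⟨fun t => (V t).toReal, fun t ht => ENNReal.toReal_pos (fun h => ?_) (hV_top t ht),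
    fun x hx y hy hxy => ENNReal.toReal_mono (hV_top x hx) ?_, fun x hx => ?_, fun t ht => ?_⟩
  · exact mul_ne_zero (tsub_pos_of_lt hc_inv).ne' (ENNReal.ofReal_pos.2 (hw_pos t ht)).ne'
      (add_eq_zero.1 h).2
  · exact add_le_add (mul_le_mul_right (hu_anti hx hy hxy) _)
      (mul_le_mul_right (ENNReal.ofReal_le_ofReal (hw hx hy hxy)) _)
  · calc ∫⁻ t in Ioo 0 x, ENNReal.ofReal (V t).toReal
        ≤ ∫⁻ t in Ioo 0 x, V t := lintegral_mono fun t => ENNReal.ofReal_toReal_le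
      _ = c⁻¹ * (∫⁻ t in Ioo 0 x, u t) +
            (1 - c⁻¹) * ∫⁻ t in Ioo 0 x, ENNReal.ofReal (w t) := by
          rw [hV, lintegral_add_left (hu.const_mul _), lintegral_const_mul _ hu,
            lintegral_const_mul' _ _ hd_top]
      _ ≤ (c⁻¹ + (1 - c⁻¹)) * ∫⁻ t in Ioo 0 x, ENNReal.ofReal (w t) := by
          rw [add_mul]
          exact add_le_add_left (mul_le_mul_right (huw x hx) _) _
      _ = ∫⁻ t in Ioo 0 x, ENNReal.ofReal (w t) := by
          rw [add_tsub_cancel_of_le hc_inv.le, one_mul]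
  · rw [ENNReal.ofReal_toReal (hV_top t ht), hV, mul_add, ENNReal.mul_inv_cancel_left hc0 hc_top]
    exact le_self_add

theorem lintegral_rpow_mul_rpow_one_sub_le {a : ℝ≥0∞} {φ K V : ℝ → ℝ≥0∞} {q : ℝ} (hq : 1 ≤ q)
    (hφ : Measurable φ) (hK : Measurable K) (hV : ∀ t ∈ Iset a, V t ≠ 0)
    (hV_top : ∀ t ∈ Iset a, V t ≠ ∞) (h : ∀ t ∈ Iset a, φ t ≤ K t * V t) :
    ∫⁻ t in Iset a, φ t ^ q * V t ^ (1 - q) ≤ ∫⁻ t, K t ^ (q - 1) ∂(volI a).withDensity φ := by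
  rw [lintegral_withDensity_eq_lintegral_mul _ hφ (hK.pow_const _)]
  exact setLIntegral_mono' (measurableSet_Iset a) fun t ht =>
    rpow_mul_rpow_one_sub_le hq (hV t ht) (hV_top t ht) (h t ht)

section OptimalWeight

variable {a M c : ℝ≥0∞} {φ : ℝ → ℝ≥0∞} {w f : ℝ → ℝ} {p q : ℝ}

theorem exists_weight_le_mul_levelFun (hpq : p.HolderConjugate q) (hM : M ≠ ∞)
    (hdual : AntitoneDualBound ((volI a).withDensity φ) (wMeas (Iset a) w) p M)
    (hφ : Antitone φ) (hφ_right : ∀ x ∈ Iset a, ∀ c < φ x, ∃ y > x, c < φ y)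
    (hw_pos : ∀ x ∈ Iset a, 0 < w x) (hw : AntitoneOn w (Iset a))
    (hβ : ∀ y, wMeas (Iset a) w (Iic y) ≠ ∞) (hc : 1 < c) (hc_top : c ≠ ∞) :
    ∃ v : ℝ → ℝ, (∀ t ∈ Iset a, 0 < v t) ∧ AntitoneOn v (Iset a) ∧
      (∀ x ∈ Iset a, ∫⁻ t in Ioo 0 x, ENNReal.ofReal (v t) ≤
        ∫⁻ t in Ioo 0 x, ENNReal.ofReal (w t)) ∧
      ∀ t ∈ Iset a, φ t ≤
        c * levelFun ((volI a).withDensity φ) (wMeas (Iset a) w) t * ENNReal.ofReal (v t) := by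
  set ψ : ℝ → ℝ≥0∞ := fun t => ENNReal.ofReal (w t)
  set lam := levelFun ((volI a).withDensity φ) (wMeas (Iset a) w)
  have hψ : AntitoneOn ψ (Iset a) := ENNReal.ofReal_mono.comp_antitoneOn hw
  have hα : ∀ y, (volI a).withDensity φ (Iic y) ≠ ∞ := fun y =>
    measure_Iic_ne_top_of_antitoneDualBound hpq.pos hM hdual (hβ y)
  have h_zero : ∀ x ∈ Iset a, φ x ≠ 0 → lam x ≠ 0 := fun x hx =>
    levelFun_withDensity_ne_zero hφ hφ_right hα hβ hx
  have h_top : ∀ x ∈ Iset a, lam x ≠ ∞ := fun x hx => levelFun_ne_top hpq hM hdual hβ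
    (withDensity_volI_Iic_ne_zero hψ hx (ENNReal.ofReal_pos.2 (hw_pos x hx)).ne')
  have hu_top : ∀ x ∈ Iset a, levelWeight a φ ψ x ≠ ∞ := fun x hx => by
    rcases eq_or_ne (φ x) 0 with hφx | hφx
    · simp [levelWeight, hφx]
    · exact ENNReal.div_ne_top
        (ne_top_of_withDensity_volI_Iic_ne_top (hφ.antitoneOn _) hx (hα x)) (h_zero x hx hφx)
  obtain ⟨v, hv_pos, hv, hvw, hle⟩ := exists_pos_weight_le_mul
    (hφ.measurable.div (antitone_levelFun _ _).measurable)
    (antitoneOn_levelWeight hφ hφ_right hψ h_zero h_top) hu_top hw_pos hw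
    (fun x hx => setLIntegral_levelWeight_le hφ.measurable hα hβ hx) hc hc_top
  refine ⟨v, hv_pos, hv, hvw, fun t ht => ?_⟩
  rw [← levelFun_mul_levelWeight (h_zero t ht) (h_top t ht), mul_right_comm, mul_comm]
  exact mul_le_mul_left (hle t ht) _

theorem exists_weight_lintegral_rpow_le (hpq : p.HolderConjugate q) (hM : M ≠ ∞)
    (hdual : AntitoneDualBound ((volI a).withDensity φ) (wMeas (Iset a) w) p M)
    (hφ : Antitone φ) (hφ_right : ∀ x ∈ Iset a, ∀ c < φ x, ∃ y > x, c < φ y)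
    (hw_pos : ∀ x ∈ Iset a, 0 < w x) (hw : AntitoneOn w (Iset a))
    (hβ : ∀ y, wMeas (Iset a) w (Iic y) ≠ ∞) (hc : 1 < c) (hc_top : c ≠ ∞) :
    ∃ v : ℝ → ℝ, (∀ t ∈ Iset a, 0 < v t) ∧ AntitoneOn v (Iset a) ∧
      (∀ x ∈ Iset a, ∫⁻ t in Ioo 0 x, ENNReal.ofReal (v t) ≤
        ∫⁻ t in Ioo 0 x, ENNReal.ofReal (w t)) ∧
      ∫⁻ t in Iset a, φ t ^ q * ENNReal.ofReal (v t) ^ (1 - q) ≤ c ^ (q - 1) * M ^ q := by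
  obtain ⟨v, hv_pos, hv, hvw, hle⟩ :=
    exists_weight_le_mul_levelFun hpq hM hdual hφ hφ_right hw_pos hw hβ hc hc_top
  refine ⟨v, hv_pos, hv, hvw, ?_⟩
  set lam := levelFun ((volI a).withDensity φ) (wMeas (Iset a) w)
  have hlam : Measurable lam := (antitone_levelFun _ _).measurable
  calc ∫⁻ t in Iset a, φ t ^ q * ENNReal.ofReal (v t) ^ (1 - q)
      ≤ ∫⁻ t, (c * lam t) ^ (q - 1) ∂(volI a).withDensity φ :=
        lintegral_rpow_mul_rpow_one_sub_le hpq.symm.lt.le hφ.measurable (hlam.const_mul c)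
          (fun t ht => (ENNReal.ofReal_pos.2 (hv_pos t ht)).ne')
          (fun _ _ => ENNReal.ofReal_ne_top) hle
    _ = c ^ (q - 1) * ∫⁻ t, lam t ^ (q - 1) ∂(volI a).withDensity φ := by
        simp only [ENNReal.mul_rpow_of_nonneg _ _ hpq.symm.sub_one_pos.le]
        rw [lintegral_const_mul _ (hlam.pow_const _)]
    _ ≤ c ^ (q - 1) * M ^ q :=
        mul_le_mul_right (lintegral_levelFun_rpow_le hpq hM hdual hβ) _

theorem antitoneDualBound_rearr (hp : 0 ≤ p) (hw : AntitoneOn w (Iset a)) (hf : Measurable f) :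
    AntitoneDualBound ((volI a).withDensity (rearr (volI a) f)) (wMeas (Iset a) w) p
      (lorentzDualNorm a w p f) := by
  intro k hk hk_top hkw
  have hφ : Measurable (rearr (volI a) f) := measurable_rearrE _ _
  rw [lintegral_wMeas (aemeasurable_restrict_of_antitoneOn (measurableSet_Iset a) hw)
    (hk.measurable.pow_const p)] at hkw
  rw [lintegral_withDensity_eq_lintegral_mul _ hφ hk.measurable]
  exact setLIntegral_rearr_mul_le_lorentzDualNorm hp hf hk hk_top hkw

end OptimalWeight

theorem stmt_18_general (a : ℝ≥0∞) (w : ℝ → ℝ)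
    (hw_pos : ∀ x ∈ Iset a, 0 < w x) (hw_anti : AntitoneOn w (Iset a))
    (hW_fin : ∀ t ∈ Iset a, ∫⁻ s in Set.Ioo 0 t, ENNReal.ofReal (w s) ≠ ∞)
    (p q : ℝ) (hpq : p.HolderConjugate q) (f : ℝ → ℝ) (hf : Measurable f) :
    lorentzDualNorm a w p f
      = sInf {c : ℝ≥0∞ | ∃ v : ℝ → ℝ, (∀ t ∈ Iset a, 0 < v t) ∧ AntitoneOn v (Iset a) ∧
          (∀ x ∈ Iset a,
            ∫⁻ t in Set.Ioo 0 x, ENNReal.ofReal (v t)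
              ≤ ∫⁻ t in Set.Ioo 0 x, ENNReal.ofReal (w t)) ∧
          c = (∫⁻ t in Iset a,
                rearr (volI a) f t ^ q * ENNReal.ofReal (v t) ^ (1 - q)) ^ (1/q)} := by
  have hβ : ∀ y, wMeas (Iset a) w (Iic y) ≠ ∞ := withDensity_volI_Iic_ne_top
    (ENNReal.ofReal_mono.comp_antitoneOn hw_anti) (fun _ _ => ENNReal.ofReal_ne_top) hW_fin
  refine le_antisymm (le_sInf ?_) ?_
  · rintro _ ⟨v, hv_pos, hv, hvw, rfl⟩
    exact lorentzDualNorm_le_of_submajorized hpq hv_pos hv hw_anti hvw hf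
  rcases eq_or_ne (lorentzDualNorm a w p f) ∞ with htop | hfin
  · exact htop ▸ le_top
  refine le_of_forall_one_lt_le_rpow_mul ((q - 1) * (1 / q)) fun c hc hc_top => ?_
  obtain ⟨v, hv_pos, hv, hvw, hle⟩ := exists_weight_lintegral_rpow_le hpq hfin
    (antitoneDualBound_rearr hpq.nonneg hw_anti hf) (antitone_rearrE _ _)
    (fun x hx _ => exists_gt_lt_rearrE hx.1.le) hw_pos hw_anti hβ hc hc_top
  refine le_trans (sInf_le ⟨v, hv_pos, hv, hvw, rfl⟩) ?_
  calc (∫⁻ t in Iset a, rearr (volI a) f t ^ q * ENNReal.ofReal (v t) ^ (1 - q)) ^ (1 / q)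
      ≤ (c ^ (q - 1) * lorentzDualNorm a w p f ^ q) ^ (1 / q) :=
        ENNReal.rpow_le_rpow hle hpq.symm.one_div_nonneg
    _ = c ^ ((q - 1) * (1 / q)) * lorentzDualNorm a w p f := by
        rw [ENNReal.mul_rpow_of_nonneg _ _ hpq.symm.one_div_nonneg, ← ENNReal.rpow_mul,
          ← ENNReal.rpow_mul, mul_one_div_cancel hpq.symm.ne_zero, ENNReal.rpow_one]

/-- For `1 < p < ∞`, `1/p + 1/q = 1`, and a non-increasing positive weight `w`
with `W` finite, if `N(f) < ∞` then
`N(f) = inf { (∫_I (f*)^q v^{1−q})^{1/q} : v non-increasing positive, v ≺ w }`. -/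
theorem stmt_18 (a : ℝ≥0∞) (ha : 0 < a) (w : ℝ → ℝ)
    (hw_pos : ∀ x ∈ Iset a, 0 < w x) (hw_anti : AntitoneOn w (Iset a)) (hw_meas : Measurable w)
    (hW_fin : ∀ t ∈ Iset a, ∫⁻ s in Set.Ioo 0 t, ENNReal.ofReal (w s) ≠ ∞)
    (p q : ℝ) (hp : 1 < p) (hpq : 1/p + 1/q = 1)
    (f : ℝ → ℝ) (hf : Measurable f)
    (hfin : lorentzDualNorm a w p f ≠ ∞) :
    lorentzDualNorm a w p f
      = sInf {c : ℝ≥0∞ | ∃ v : ℝ → ℝ, (∀ t ∈ Iset a, 0 < v t) ∧ AntitoneOn v (Iset a) ∧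
          (∀ x ∈ Iset a,
            ∫⁻ t in Set.Ioo 0 x, ENNReal.ofReal (v t)
              ≤ ∫⁻ t in Set.Ioo 0 x, ENNReal.ofReal (w t)) ∧
          c = (∫⁻ t in Iset a,
                rearr (volI a) f t ^ q * ENNReal.ofReal (v t) ^ (1 - q)) ^ (1/q)} :=
  stmt_18_general a w hw_pos hw_anti hW_fin p q
    (Real.holderConjugate_iff.2 ⟨hp, by simpa only [one_div] using hpq⟩) f hf
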